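/- Every simple graph of order 12 with minimum degree at least 6 and exactly 38 edges contains a K_6 minor. -/

import Mathlib

attribute [local instance] Classical.propDecidable

/-- `G` contains a `K_t` minor: `t` pairwise disjoint nonempty branch sets, each inducing a
connected subgraph of `G`, with an edge of `G` between any two of them. -/
def SimpleGraph.HasCompleteMinor {V : Type*} (G : SimpleGraph V) (t : ℕ) : Prop :=
  ∃ B : Fin t → Set V,
    (∀ i, (B i).Nonempty) ∧
    (∀ i, (G.induce (B i)).Connected) ∧
    (∀ i j, i ≠ j → Disjoint (B i) (B j)) ∧
    (∀ i j, i ≠ j → ∃ u ∈ B i, ∃ v ∈ B j, G.Adj u v)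

namespace K6

section basics

variable {V : Type*} {G H : SimpleGraph V}

lemma conn_star {v : V} {T : Set V} (h : ∀ a ∈ T, G.Adj v a) :
    (G.induce (insert v T)).Connected := by
  rw [SimpleGraph.connected_iff_exists_forall_reachable]
  refine ⟨⟨v, Set.mem_insert _ _⟩, ?_⟩
  rintro ⟨w, hw⟩
  rcases Set.mem_insert_iff.1 hw with rfl | hT
  · exact SimpleGraph.Reachable.refl _
  · exact SimpleGraph.Adj.reachable (by simpa using h w hT)

lemma conn_single (v : V) : (G.induce ({v} : Set V)).Connected := by
  simp

lemma conn_insert {S : Set V} (hS : (G.induce S).Connected) {u s : V} (hs : s ∈ S)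
    (h : G.Adj u s) : (G.induce (insert u S)).Connected := by
  rw [SimpleGraph.connected_iff_exists_forall_reachable]
  refine ⟨⟨s, Set.mem_insert_of_mem _ hs⟩, ?_⟩
  rintro ⟨w, hw⟩
  rcases Set.mem_insert_iff.1 hw with rfl | hT
  · exact SimpleGraph.Adj.reachable (by simpa using h.symm)
  · have hr := hS.preconnected ⟨s, hs⟩ ⟨w, hT⟩
    exact hr.map (SimpleGraph.induceHomOfLE G (Set.subset_insert u S)).toHom

lemma conn_pair {u v : V} (h : G.Adj u v) : (G.induce ({u, v} : Set V)).Connected :=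
  conn_insert (conn_single v) (Set.mem_singleton v) h

/-- disjoint and joined by an edge -/
def Tch (G : SimpleGraph V) (S T : Set V) : Prop :=
  Disjoint S T ∧ ∃ u ∈ S, ∃ v ∈ T, G.Adj u v

lemma Tch.symm {S T : Set V} (h : Tch G S T) : Tch G T S := by
  obtain ⟨h1, u, hu, v, hv, huv⟩ := h
  exact ⟨h1.symm, v, hv, u, hu, huv.symm⟩

lemma minor_of_fun (B : Fin 6 → Set V) (hc : ∀ i, (G.induce (B i)).Connected)
    (ht : ∀ i j, i < j → Tch G (B i) (B j)) : G.HasCompleteMinor 6 := by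
  have ht' : ∀ i j, i ≠ j → Tch G (B i) (B j) := by
    intro i j hij
    rcases lt_or_gt_of_ne hij with h | h
    · exact ht i j h
    · exact (ht j i h).symm
  refine ⟨B, ?_, hc, fun i j h => (ht' i j h).1, fun i j h => (ht' i j h).2⟩
  intro i
  have := (hc i).nonempty
  exact Set.nonempty_coe_sort.1 this

lemma mk6 {B0 B1 B2 B3 B4 B5 : Set V}
    (c0 : (G.induce B0).Connected) (c1 : (G.induce B1).Connected)
    (c2 : (G.induce B2).Connected) (c3 : (G.induce B3).Connected)
    (c4 : (G.induce B4).Connected) (c5 : (G.induce B5).Connected)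
    (h01 : Tch G B0 B1) (h02 : Tch G B0 B2) (h03 : Tch G B0 B3) (h04 : Tch G B0 B4)
    (h05 : Tch G B0 B5) (h12 : Tch G B1 B2) (h13 : Tch G B1 B3) (h14 : Tch G B1 B4)
    (h15 : Tch G B1 B5) (h23 : Tch G B2 B3) (h24 : Tch G B2 B4) (h25 : Tch G B2 B5)
    (h34 : Tch G B3 B4) (h35 : Tch G B3 B5) (h45 : Tch G B4 B5) :
    G.HasCompleteMinor 6 := by
  apply minor_of_fun ![B0, B1, B2, B3, B4, B5]
  · intro i
    fin_cases i <;> assumption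
  · intro i j hij
    fin_cases i <;> fin_cases j <;> first | assumption | (exfalso; revert hij; simp)

lemma minor_mono (h : H ≤ G) (hm : H.HasCompleteMinor 6) : G.HasCompleteMinor 6 := by
  obtain ⟨B, h1, h2, h3, h4⟩ := hm
  refine ⟨B, h1, fun i => (h2 i).mono ?_, h3, fun i j hij => ?_⟩
  · intro a b hab
    exact h hab
  · obtain ⟨u, hu, v, hv, huv⟩ := h4 i j hij
    exact ⟨u, hu, v, hv, h huv⟩

/-- contraction of the edge `xy` onto `x`, leaving `y` isolated -/
def contr (G : SimpleGraph V) (x y : V) : SimpleGraph V where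
  Adj u w := u ≠ w ∧ u ≠ y ∧ w ≠ y ∧
    (G.Adj u w ∨ (u = x ∧ G.Adj y w) ∨ (w = x ∧ G.Adj y u))
  symm := ⟨by
    rintro u w ⟨h1, h2, h3, h4⟩
    refine ⟨h1.symm, h3, h2, ?_⟩
    rcases h4 with h | h | h
    · exact Or.inl h.symm
    · exact Or.inr (Or.inr h)
    · exact Or.inr (Or.inl h)⟩
  loopless := ⟨fun u h => h.1 rfl⟩

lemma contr_minor {x y : V} (hxy : G.Adj x y) (h : (contr G x y).HasCompleteMinor 6) :
    G.HasCompleteMinor 6 := by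
  obtain ⟨B, h1, h2, h3, h4⟩ := h
  have hy : ∀ i, y ∉ B i := by
    intro i hyi
    obtain ⟨j, hj⟩ : ∃ j : Fin 6, i ≠ j := by
      by_cases hi : i = 0
      · exact ⟨1, by rw [hi]; simp⟩
      · exact ⟨0, hi⟩
    obtain ⟨u, hu, v, hv, huv⟩ := h4 i j hj
    obtain ⟨p⟩ := (h2 i).preconnected ⟨y, hyi⟩ ⟨u, hu⟩
    cases p with
    | nil => exact huv.2.1 rfl
    | cons hadj _ => exact hadj.2.1 rfl
  have lift : ∀ i u, u ∈ B i → u ∈ {u | u ∈ B i ∨ (u = y ∧ x ∈ B i)} := fun i u hu => Or.inl hu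
  refine ⟨fun i => {u | u ∈ B i ∨ (u = y ∧ x ∈ B i)}, ?_, ?_, ?_, ?_⟩
  · intro i
    obtain ⟨u, hu⟩ := h1 i
    exact ⟨u, Or.inl hu⟩
  · intro i
    have yx : ∀ hx : x ∈ B i, (G.induce {u | u ∈ B i ∨ (u = y ∧ x ∈ B i)}).Adj
        ⟨x, Or.inl hx⟩ ⟨y, Or.inr ⟨rfl, hx⟩⟩ := fun hx => hxy
    have step : ∀ a b : B i, ((contr G x y).induce (B i)).Adj a b →
        (G.induce {u | u ∈ B i ∨ (u = y ∧ x ∈ B i)}).Reachable ⟨a.1, lift i _ a.2⟩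
          ⟨b.1, lift i _ b.2⟩ := by
      rintro ⟨a, ha⟩ ⟨b, hb⟩ hab
      rcases hab.2.2.2 with h | ⟨h, h'⟩ | ⟨h, h'⟩
      · exact SimpleGraph.Adj.reachable h
      · have h : a = x := h
        subst h
        exact (yx ha).reachable.trans (SimpleGraph.Adj.reachable h')
      · have h : b = x := h
        subst h
        have h2 : (G.induce {u | u ∈ B i ∨ (u = y ∧ b ∈ B i)}).Adj
          ⟨y, Or.inr ⟨rfl, hb⟩⟩ ⟨a, Or.inl ha⟩ := h'
        exact ((yx hb).reachable.trans h2.reachable).symm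
    have walk : ∀ a b : B i, ((contr G x y).induce (B i)).Walk a b →
        (G.induce {u | u ∈ B i ∨ (u = y ∧ x ∈ B i)}).Reachable ⟨a.1, lift i _ a.2⟩
          ⟨b.1, lift i _ b.2⟩ := by
      intro a b p
      induction p with
      | nil => exact SimpleGraph.Reachable.refl _
      | cons hadj _ ih => exact (step _ _ hadj).trans ih
    rw [SimpleGraph.connected_iff_exists_forall_reachable]
    obtain ⟨u, hu⟩ := h1 i
    refine ⟨⟨u, Or.inl hu⟩, ?_⟩
    rintro ⟨w, hw | ⟨rfl, hx⟩⟩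
    · obtain ⟨p⟩ := (h2 i).preconnected ⟨u, hu⟩ ⟨w, hw⟩
      exact walk _ _ p
    · obtain ⟨p⟩ := (h2 i).preconnected ⟨u, hu⟩ ⟨x, hx⟩
      exact (walk _ _ p).trans (yx hx).reachable
  · intro i j hij
    have hd := h3 i j hij
    rw [Set.disjoint_left] at hd ⊢
    rintro a (ha | ⟨rfl, ha⟩) (hb | ⟨hb', hb⟩)
    · exact hd ha hb
    · exact hy i (hb' ▸ ha)
    · exact hy j hb
    · exact hd ha hb
  · intro i j hij
    obtain ⟨u, hu, v, hv, -, -, -, h | ⟨rfl, h⟩ | ⟨rfl, h⟩⟩ := h4 i j hij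
    · exact ⟨u, Or.inl hu, v, Or.inl hv, h⟩
    · exact ⟨y, Or.inr ⟨rfl, hu⟩, v, Or.inl hv, h⟩
    · exact ⟨u, Or.inl hu, y, Or.inr ⟨rfl, hv⟩, h.symm⟩

end basics

section counting

variable {V : Type*} {G : SimpleGraph V}

/-- neighbours of `u` inside `S` -/
noncomputable def nb (G : SimpleGraph V) (S : Finset V) (u : V) : Finset V := S.filter (fun w => G.Adj u w)

lemma mem_nb {S : Finset V} {u w : V} : w ∈ nb G S u ↔ w ∈ S ∧ G.Adj u w := by simp [nb]

lemma degree_eq [Fintype V] (u : V) : G.degree u = (nb G Finset.univ u).card := by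
  rw [← SimpleGraph.card_neighborFinset_eq_degree]
  congr 1
  ext w
  simp [mem_nb]

lemma sum_deg [Fintype V] : ∑ u, (nb G Finset.univ u).card = 2 * G.edgeFinset.card := by
  rw [← SimpleGraph.sum_degrees_eq_twice_card_edges]
  exact Finset.sum_congr rfl fun u _ => (degree_eq u).symm

lemma card_nb_sum (S : Finset V) (u : V) :
    (nb G S u).card = ∑ w ∈ S, if G.Adj u w then 1 else 0 := by
  rw [nb, Finset.card_filter]

lemma double_count (S T : Finset V) :
    ∑ u ∈ S, (nb G T u).card = ∑ w ∈ T, (nb G S w).card := by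
  simp_rw [card_nb_sum]
  rw [Finset.sum_comm]
  simp_rw [G.adj_comm]

lemma nb_union {S T : Finset V} (h : Disjoint S T) (u : V) :
    (nb G (S ∪ T) u).card = (nb G S u).card + (nb G T u).card := by
  simp_rw [card_nb_sum]
  exact Finset.sum_union h

lemma contr_edges [Fintype V] {x y : V} (hxy : G.Adj x y) :
    G.edgeFinset.card ≤
      (contr G x y).edgeFinset.card + 1 + (nb G (nb G Finset.univ x) y).card := by
  set D := (nb G Finset.univ y).filter (fun w => ¬ G.Adj x w ∧ w ≠ x) with hD
  have hdeg : (nb G Finset.univ y).card = (nb G (nb G Finset.univ x) y).card + 1 + D.card := by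
    have e : nb G Finset.univ y = (nb G (nb G Finset.univ x) y ∪ {x}) ∪ D := by
      ext w
      simp only [hD, mem_nb, Finset.mem_union, Finset.mem_filter, Finset.mem_univ, true_and,
        Finset.mem_singleton]
      constructor
      · intro h; tauto
      · rintro ((h | h) | h)
        · exact h.2
        · rw [h]; exact hxy.symm
        · exact h.1
    rw [e, Finset.card_union_of_disjoint, Finset.card_union_of_disjoint, Finset.card_singleton]
    · simp [mem_nb]
    · rw [Finset.disjoint_left]
      intro w
      simp only [hD, mem_nb, Finset.mem_union, Finset.mem_filter, Finset.mem_univ, true_and,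
        Finset.mem_singleton]
      tauto
  have hinc : (G.incidenceFinset y).card = (nb G Finset.univ y).card := by
    rw [SimpleGraph.card_incidenceFinset_eq_degree, degree_eq]
  have hsub : (G.edgeFinset \ G.incidenceFinset y) ∪ D.image (fun w => s(x, w)) ⊆
      (contr G x y).edgeFinset := by
    intro e he
    rcases Finset.mem_union.1 he with he | he
    · induction e with
      | h u w =>
        simp only [Finset.mem_sdiff, SimpleGraph.mem_edgeFinset, SimpleGraph.mem_incidenceFinset,
          SimpleGraph.mem_edgeSet, SimpleGraph.mk'_mem_incidenceSet_iff] at he ⊢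
        have := he.1.ne
        refine ⟨this, ?_, ?_, Or.inl he.1⟩
        · rintro rfl; exact he.2 ⟨he.1, Or.inl rfl⟩
        · rintro rfl; exact he.2 ⟨he.1, Or.inr rfl⟩
    · obtain ⟨w, hw, rfl⟩ := Finset.mem_image.1 he
      simp only [hD, mem_nb, Finset.mem_filter, Finset.mem_univ, true_and] at hw
      rw [SimpleGraph.mem_edgeFinset, SimpleGraph.mem_edgeSet]
      exact ⟨hw.2.2.symm, hxy.ne, hw.1.ne', Or.inr (Or.inl ⟨rfl, hw.1⟩)⟩
  have hdisj : Disjoint (G.edgeFinset \ G.incidenceFinset y) (D.image (fun w => s(x, w))) := by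
    rw [Finset.disjoint_left]
    intro e he he'
    obtain ⟨w, hw, rfl⟩ := Finset.mem_image.1 he'
    simp only [hD, mem_nb, Finset.mem_filter, Finset.mem_univ, true_and] at hw
    have := (Finset.mem_sdiff.1 he).1
    rw [SimpleGraph.mem_edgeFinset, SimpleGraph.mem_edgeSet] at this
    exact hw.2.1 this
  have hc := Finset.card_le_card hsub
  rw [Finset.card_union_of_disjoint hdisj, Finset.card_image_of_injective] at hc
  · have := Finset.le_card_sdiff (G.incidenceFinset y) G.edgeFinset
    omega
  · intro a b hab
    exact Sym2.congr_right.1 hab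

/-- `Mader` data: all edges inside `S`. -/
lemma contr_support {S : Finset V} (hS : ∀ u w, G.Adj u w → u ∈ S) {x y : V} (hxy : G.Adj x y) :
    ∀ u w, (contr G x y).Adj u w → u ∈ S.erase y := by
  rintro u w ⟨h1, h2, h3, h4⟩
  refine Finset.mem_erase.2 ⟨h2, ?_⟩
  rcases h4 with h | ⟨rfl, h⟩ | ⟨rfl, h⟩
  · exact hS _ _ h
  · exact hS _ _ hxy
  · exact hS _ _ h.symm

lemma del_edges [Fintype V] (v : V) :
    G.edgeFinset.card ≤ (G.deleteIncidenceSet v).edgeFinset.card + (nb G Finset.univ v).card := by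
  rw [SimpleGraph.card_edgeFinset_deleteIncidenceSet, degree_eq]
  omega

lemma del_support {S : Finset V} (hS : ∀ u w, G.Adj u w → u ∈ S) (v : V) :
    ∀ u w, (G.deleteIncidenceSet v).Adj u w → u ∈ S.erase v := by
  intro u w h
  rw [SimpleGraph.deleteIncidenceSet_adj] at h
  exact Finset.mem_erase.2 ⟨h.2.1, hS _ _ h.1⟩

lemma exists_del [Fintype V] {S : Finset V} (hS : ∀ u w, G.Adj u w → u ∈ S) (v : V) :
    ∃ H ≤ G, (∀ u w, H.Adj u w → u ∈ S.erase v) ∧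
      G.edgeFinset.card ≤ H.edgeFinset.card + (nb G Finset.univ v).card :=
  ⟨G.deleteIncidenceSet v, G.deleteIncidenceSet_le v, del_support hS v, by
    convert del_edges v⟩

lemma exists_sub [Fintype V] (k : ℕ) (hk : k ≤ G.edgeFinset.card) :
    ∃ H ≤ G, H.edgeFinset.card = k := by
  obtain ⟨T, hT, hc⟩ := Finset.exists_subset_card_eq hk
  have hT' : ∀ e ∈ T, e ∈ G.edgeSet := fun e he => by simpa using hT he
  obtain ⟨H, hH⟩ : ∃ H : SimpleGraph V, H = SimpleGraph.fromEdgeSet (T : Set (Sym2 V)) := ⟨_, rfl⟩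
  refine ⟨H, ?_, ?_⟩
  · intro u w h
    rw [hH, SimpleGraph.fromEdgeSet_adj] at h
    exact hT' _ h.1
  · rw [← hc]
    congr 1
    ext e
    rw [SimpleGraph.mem_edgeFinset, hH]
    simp only [SimpleGraph.edgeSet_fromEdgeSet, Set.mem_sdiff, Finset.mem_coe]
    constructor
    · exact fun h => h.1
    · exact fun h => ⟨h, fun hd => G.not_isDiag_of_mem_edgeSet (hT' _ h) hd⟩

end counting

section mader

variable {V : Type*} {G : SimpleGraph V}

/-- The vertex `v` joined to an octahedron with three antipodal pairs. -/
structure Oct (G : SimpleGraph V) (v a a' b b' c c' : V) : Prop where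
  na : a ≠ a'
  nb : b ≠ b'
  nc : c ≠ c'
  va : G.Adj v a
  va' : G.Adj v a'
  vb : G.Adj v b
  vb' : G.Adj v b'
  vc : G.Adj v c
  vc' : G.Adj v c'
  ab : G.Adj a b
  ab' : G.Adj a b'
  a'b : G.Adj a' b
  a'b' : G.Adj a' b'
  bc : G.Adj b c
  bc' : G.Adj b c'
  b'c : G.Adj b' c
  b'c' : G.Adj b' c'
  ca : G.Adj c a
  ca' : G.Adj c a'
  c'a : G.Adj c' a
  c'a' : G.Adj c' a'

lemma Oct.rot {v a a' b b' c c' : V} (h : Oct G v a a' b b' c c') : Oct G v b b' c c' a a' :=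
  ⟨h.nb, h.nc, h.na, h.vb, h.vb', h.vc, h.vc', h.va, h.va', h.bc, h.bc', h.b'c, h.b'c',
    h.ca, h.ca', h.c'a, h.c'a', h.ab, h.ab', h.a'b, h.a'b'⟩

lemma Oct.done {v a a' b b' c c' : V} (h : Oct G v a a' b b' c c') (S : Set V)
    (hS : (G.induce S).Connected) (hc : c ∈ S) (hc' : ∃ s ∈ S, G.Adj s c')
    (nv : v ∉ S) (na : a ∉ S) (na' : a' ∉ S) (nb : b ∉ S) (nb' : b' ∉ S) (nc' : c' ∉ S) :
    G.HasCompleteMinor 6 := by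
  obtain ⟨s, hs, hsc⟩ := hc'
  have e1 := h.va.ne
  have e2 := h.vb.ne
  have e3 := h.va'.ne
  have e4 := h.vb'.ne
  have e5 := h.vc'.ne
  have e6 := h.a'b.ne
  have e7 := h.ab'.ne
  have e8 := h.c'a.ne
  have e9 := h.bc'.ne
  have e10 := h.a'b'.ne
  have e11 := h.c'a'.ne
  have e12 := h.b'c'.ne
  have d1 := h.na
  have d2 := h.nb
  refine mk6 (B0 := {v}) (B1 := {a, b}) (B2 := {a'}) (B3 := {b'}) (B4 := S) (B5 := {c'})
    (conn_single _) (conn_pair h.ab) (conn_single _) (conn_single _) hS (conn_single _)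
    ⟨?_, v, by simp, a, by simp, h.va⟩ ⟨?_, v, by simp, a', by simp, h.va'⟩
    ⟨?_, v, by simp, b', by simp, h.vb'⟩ ⟨?_, v, by simp, c, hc, h.vc⟩
    ⟨?_, v, by simp, c', by simp, h.vc'⟩ ⟨?_, b, by simp, a', by simp, h.a'b.symm⟩
    ⟨?_, a, by simp, b', by simp, h.ab'⟩ ⟨?_, a, by simp, c, hc, h.ca.symm⟩
    ⟨?_, a, by simp, c', by simp, h.c'a.symm⟩ ⟨?_, a', by simp, b', by simp, h.a'b'⟩
    ⟨?_, a', by simp, c, hc, h.ca'.symm⟩ ⟨?_, a', by simp, c', by simp, h.c'a'.symm⟩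
    ⟨?_, b', by simp, c, hc, h.b'c⟩ ⟨?_, b', by simp, c', by simp, h.b'c'⟩
    ⟨?_, s, hs, c', by simp, hsc⟩
  all_goals
    simp only [Set.disjoint_singleton_left, Set.disjoint_singleton_right, Set.mem_insert_iff,
      Set.mem_singleton_iff, Set.disjoint_insert_left]
    grind

lemma Oct.adj {v a a' b b' c c' : V} (h : Oct G v a a' b b' c c') (hc : G.Adj c c') :
    G.HasCompleteMinor 6 := by
  refine h.done {c} (conn_single _) rfl ⟨c, rfl, hc⟩ h.vc.ne h.ca.ne' h.ca'.ne' h.bc.ne h.b'c.ne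
    hc.ne'

lemma Oct.vertex {v a a' b b' c c' w : V} (h : Oct G v a a' b b' c c') (h1 : G.Adj w c)
    (h2 : G.Adj w c') (hv : ¬ G.Adj v w) (hvw : v ≠ w) : G.HasCompleteMinor 6 := by
  refine h.done {w, c} (conn_pair h1) (by simp) ⟨w, by simp, h2⟩ ?_ ?_ ?_ ?_ ?_ ?_
  all_goals
    rw [Set.mem_insert_iff, Set.mem_singleton_iff]
    rintro (rfl | rfl)
  · exact hvw rfl
  · exact h.vc.ne rfl
  · exact hv h.va
  · exact h.ca.ne rfl
  · exact hv h.va'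
  · exact h.ca'.ne rfl
  · exact hv h.vb
  · exact h.bc.ne rfl
  · exact hv h.vb'
  · exact h.b'c.ne rfl
  · exact hv h.vc'
  · exact h.nc rfl

lemma Oct.edge {v a a' b b' c c' w x : V} (h : Oct G v a a' b b' c c') (h1 : G.Adj w c)
    (h2 : G.Adj x c') (hwx : G.Adj x w) (hv : ¬ G.Adj v w) (hvw : v ≠ w)
    (hv' : ¬ G.Adj v x) (hvx : v ≠ x) : G.HasCompleteMinor 6 := by
  refine h.done {x, w, c} (conn_insert (conn_pair h1) (by simp) hwx) (by simp)
    ⟨x, by simp, h2⟩ ?_ ?_ ?_ ?_ ?_ ?_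
  all_goals
    rw [Set.mem_insert_iff, Set.mem_insert_iff, Set.mem_singleton_iff]
    rintro (rfl | rfl | rfl)
  · exact hvx rfl
  · exact hvw rfl
  · exact h.vc.ne rfl
  · exact hv' h.va
  · exact hv h.va
  · exact h.ca.ne rfl
  · exact hv' h.va'
  · exact hv h.va'
  · exact h.ca'.ne rfl
  · exact hv' h.vb
  · exact hv h.vb
  · exact h.bc.ne rfl
  · exact hv' h.vb'
  · exact hv h.vb'
  · exact h.b'c.ne rfl
  · exact hv' h.vc'
  · exact hv h.vc'
  · exact h.nc rfl

lemma pick {Q : Finset V} (hQ : 2 ≤ Q.card)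
    (hone : ∀ a ∈ Q, ∀ p ∈ Q, ∀ q ∈ Q, a ≠ p → a ≠ q → p ≠ q → G.Adj a p ∨ G.Adj a q) :
    ∃ c ∈ Q, ∃ c' ∈ Q, c ≠ c' ∧ ∀ w ∈ Q, w ≠ c → w ≠ c' → G.Adj c w ∧ G.Adj c' w := by
  by_cases h : ∃ c ∈ Q, ∃ c' ∈ Q, c ≠ c' ∧ ¬ G.Adj c c'
  · obtain ⟨c, hc, c', hc', hne, hn⟩ := h
    refine ⟨c, hc, c', hc', hne, fun w hw h1 h2 => ⟨?_, ?_⟩⟩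
    · exact (hone c hc c' hc' w hw hne h1.symm h2.symm).resolve_left hn
    · exact (hone c' hc' c hc w hw hne.symm h2.symm h1.symm).resolve_left (fun h => hn h.symm)
  · push Not at h
    obtain ⟨c, hc, c', hc', hne⟩ := Finset.one_lt_card.1 hQ
    exact ⟨c, hc, c', hc', hne, fun w hw h1 h2 => ⟨h c hc w hw h1.symm, h c' hc' w hw h2.symm⟩⟩

lemma exists_oct {v : V} {N : Finset V} (hN : N.card = 6) (hv : ∀ a ∈ N, G.Adj v a)
    (hone : ∀ a ∈ N, ∀ p ∈ N, ∀ q ∈ N, a ≠ p → a ≠ q → p ≠ q → G.Adj a p ∨ G.Adj a q) :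
    ∃ a a' b b' c c', Oct G v a a' b b' c c' ∧ N = {a, a', b, b', c, c'} := by
  obtain ⟨a, ha, a', ha', hna, hA⟩ := pick (by omega) hone
  have hc1 : ((N.erase a).erase a').card = 4 := by
    rw [Finset.card_erase_of_mem, Finset.card_erase_of_mem ha]
    · omega
    · exact Finset.mem_erase.2 ⟨hna.symm, ha'⟩
  set N1 := (N.erase a).erase a' with hN1
  have s1 : ∀ w ∈ N1, w ∈ N ∧ w ≠ a ∧ w ≠ a' := by
    intro w hw
    simp only [hN1, Finset.mem_erase] at hw
    tauto
  obtain ⟨b, hb, b', hb', hnb, hB⟩ := pick (G := G) (Q := N1) (by omega)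
    (fun x hx p hp q hq => hone x (s1 x hx).1 p (s1 p hp).1 q (s1 q hq).1)
  have hc2 : ((N1.erase b).erase b').card = 2 := by
    rw [Finset.card_erase_of_mem, Finset.card_erase_of_mem hb]
    · omega
    · exact Finset.mem_erase.2 ⟨hnb.symm, hb'⟩
  obtain ⟨c, c', hnc, hcc⟩ := Finset.card_eq_two.1 hc2
  have hc : c ∈ (N1.erase b).erase b' := by rw [hcc]; simp
  have hc' : c' ∈ (N1.erase b).erase b' := by rw [hcc]; simp
  simp only [Finset.mem_erase] at hc hc'
  obtain ⟨b1, b2, b3⟩ := s1 b hb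
  obtain ⟨b1', b2', b3'⟩ := s1 b' hb'
  obtain ⟨c1, c2, c3⟩ := s1 c hc.2.2
  obtain ⟨c1', c2', c3'⟩ := s1 c' hc'.2.2
  have A1 := hA b b1 b2 b3
  have A2 := hA b' b1' b2' b3'
  have A3 := hA c c1 c2 c3
  have A4 := hA c' c1' c2' c3'
  have B1 := hB c hc.2.2 hc.2.1 hc.1
  have B2 := hB c' hc'.2.2 hc'.2.1 hc'.1
  refine ⟨a, a', b, b', c, c', ⟨hna, hnb, hnc, hv _ ha, hv _ ha', hv _ b1, hv _ b1', hv _ c1,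
    hv _ c1', A1.1, A2.1, A1.2, A2.2, B1.1, B2.1, B1.2, B2.2, A3.1.symm, A3.2.symm, A4.1.symm,
    A4.2.symm⟩, ?_⟩
  rw [← hcc, Finset.insert_erase, Finset.insert_erase hb, hN1, Finset.insert_erase,
    Finset.insert_erase ha]
  · exact Finset.mem_erase.2 ⟨hna.symm, ha'⟩
  · exact Finset.mem_erase.2 ⟨hnb.symm, hb'⟩

lemma nb_insert_le (T : Finset V) (x a : V) :
    (nb G (insert a T) x).card ≤ (if G.Adj x a then 1 else 0) + (nb G T x).card := by
  unfold nb
  rw [Finset.filter_insert]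
  split_ifs
  · have := Finset.card_insert_le a (T.filter (fun w => G.Adj x w))
    omega
  · omega

lemma ite_le {p q : Prop} (h : ¬ (p ∧ q)) :
    (if p then 1 else 0) + (if q then 1 else 0) ≤ 1 := by
  by_cases hp : p <;> by_cases hq : q <;> simp_all

lemma nb_oct_le {a a' b b' c c' x : V} (ha : ¬ (G.Adj x a ∧ G.Adj x a'))
    (hb : ¬ (G.Adj x b ∧ G.Adj x b')) (hc : ¬ (G.Adj x c ∧ G.Adj x c')) :
    (nb G {a, a', b, b', c, c'} x).card ≤ 3 := by
  have h1 := nb_insert_le (G := G) {a', b, b', c, c'} x a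
  have h2 := nb_insert_le (G := G) {b, b', c, c'} x a'
  have h3 := nb_insert_le (G := G) {b', c, c'} x b
  have h4 := nb_insert_le (G := G) {c, c'} x b'
  have h5 := nb_insert_le (G := G) {c'} x c
  have h6 := nb_insert_le (G := G) ∅ x c'
  have h7 : (nb G ∅ x).card = 0 := by simp [nb]
  simp only [insert_empty_eq] at h6
  have ka := ite_le ha
  have kb := ite_le hb
  have kc := ite_le hc
  generalize (if G.Adj x a then 1 else 0) = i1 at *
  generalize (if G.Adj x a' then 1 else 0) = i2 at *
  generalize (if G.Adj x b then 1 else 0) = i3 at *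
  generalize (if G.Adj x b' then 1 else 0) = i4 at *
  generalize (if G.Adj x c then 1 else 0) = i5 at *
  generalize (if G.Adj x c' then 1 else 0) = i6 at *
  omega

lemma oct_nbr [Fintype V] {v a a' b b' c c' : V}
    (hN : nb G Finset.univ v = {a, a', b, b', c, c'})
    (hcc : ¬ G.Adj c c') (hdeg : 6 ≤ (nb G Finset.univ c).card) :
    ∃ w, G.Adj w c ∧ ¬ G.Adj v w ∧ v ≠ w := by
  by_contra hcon
  push Not at hcon
  have hsub : nb G Finset.univ c ⊆ {v, a, a', b, b'} := by
    intro w hw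
    have hw := (mem_nb.1 hw).2
    by_cases hvw : G.Adj v w
    · have : w ∈ nb G Finset.univ v := mem_nb.2 ⟨Finset.mem_univ _, hvw⟩
      rw [hN] at this
      simp only [Finset.mem_insert, Finset.mem_singleton] at this ⊢
      rcases this with h | h | h | h | h | h
      · tauto
      · tauto
      · tauto
      · tauto
      · rw [h] at hw; exact absurd hw (G.irrefl)
      · rw [h] at hw; exact absurd hw hcc
    · have := hcon w hw.symm hvw
      simp [this]
  have := Finset.card_le_card hsub
  have h5 : ({v, a, a', b, b'} : Finset V).card ≤ 5 := Finset.card_le_five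
  omega

lemma hone_of {N : Finset V} (hN : N.card = 6) (h4 : ∀ a ∈ N, 4 ≤ (nb G N a).card) :
    ∀ a ∈ N, ∀ p ∈ N, ∀ q ∈ N, a ≠ p → a ≠ q → p ≠ q → G.Adj a p ∨ G.Adj a q := by
  intro a ha p hp q hq hap haq hpq
  by_contra hcon
  push Not at hcon
  have hsub : nb G N a ⊆ ((N.erase a).erase p).erase q := by
    intro w hw
    obtain ⟨h1, h2⟩ := mem_nb.1 hw
    simp only [Finset.mem_erase]
    refine ⟨?_, ?_, h2.ne', h1⟩
    · rintro rfl; exact hcon.2 h2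
    · rintro rfl; exact hcon.1 h2
  have := Finset.card_le_card hsub
  rw [Finset.card_erase_of_mem, Finset.card_erase_of_mem, Finset.card_erase_of_mem ha] at this
  · have := h4 a ha
    omega
  · simp [hap.symm, hp]
  · simp [hpq.symm, haq.symm, hq]

lemma mader_six [Fintype V] {S : Finset V} (hS : ∀ u w, G.Adj u w → u ∈ S) (hn : S.card ≤ 11)
    (hdeg : ∀ u ∈ S, 6 ≤ (nb G Finset.univ u).card) {v : V} (hvS : v ∈ S)
    (hv : (nb G Finset.univ v).card = 6)
    (h4 : ∀ a ∈ nb G Finset.univ v, 4 ≤ (nb G (nb G Finset.univ v) a).card) :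
    G.HasCompleteMinor 6 := by
  obtain ⟨a, a', b, b', c, c', ho, hN⟩ := exists_oct hv (fun a ha => (mem_nb.1 ha).2)
    (hone_of hv h4)
  by_cases hcc : G.Adj c c'
  · exact ho.adj hcc
  have hN' : nb G Finset.univ v = {a, a', b, b', c', c} := by
    rw [hN]; ext; simp; tauto
  obtain ⟨w, hw, hvw, hvw'⟩ := oct_nbr hN hcc (hdeg c (hS _ _ ho.ca))
  obtain ⟨x, hx, hvx, hvx'⟩ := oct_nbr hN' (fun h => hcc h.symm) (hdeg c' (hS _ _ ho.c'a))
  by_cases hwx : w = x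
  · subst hwx
    exact ho.vertex hw hx hvw hvw'
  by_cases hadj : G.Adj x w
  · exact ho.edge hw hx hadj hvw hvw' hvx hvx'
  have hbig : 4 ≤ (nb G (nb G Finset.univ v) w).card := by
    have hd := hdeg w (hS _ _ hw)
    have hsub : nb G Finset.univ w ⊆ nb G (nb G Finset.univ v) w ∪
        (S \ (nb G Finset.univ v ∪ {v, w, x})) := by
      intro u hu
      have hu := (mem_nb.1 hu).2
      simp only [Finset.mem_union, mem_nb, Finset.mem_sdiff, Finset.mem_insert,
        Finset.mem_singleton, Finset.mem_univ, true_and]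
      by_cases hvu : G.Adj v u
      · exact Or.inl ⟨hvu, hu⟩
      · refine Or.inr ⟨hS _ _ hu.symm, ?_⟩
        rintro (h | h | h | h)
        · exact hvu h
        · exact hvw (h ▸ hu.symm)
        · exact hu.ne h.symm
        · exact hadj (h ▸ hu.symm)
    have h1 := Finset.card_le_card hsub
    have h2 := Finset.card_union_le (nb G (nb G Finset.univ v) w)
      (S \ (nb G Finset.univ v ∪ {v, w, x}))
    have h3 : (S \ (nb G Finset.univ v ∪ {v, w, x})).card = S.card - 9 := by
      rw [Finset.card_sdiff_of_subset, Finset.card_union_of_disjoint, hv]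
      · have : ({v, w, x} : Finset V).card = 3 := Finset.card_eq_three.2
          ⟨v, w, x, hvw', hvx', hwx, rfl⟩
        rw [this]
      · rw [Finset.disjoint_left]
        intro u hu
        have hu := (mem_nb.1 hu).2
        simp only [Finset.mem_insert, Finset.mem_singleton]
        rintro (h | h | h)
        · exact hu.ne h.symm
        · exact hvw (h ▸ hu)
        · exact hvx (h ▸ hu)
      · intro u hu
        simp only [Finset.mem_union, mem_nb, Finset.mem_insert, Finset.mem_singleton] at hu
        rcases hu with h | h | h | h
        · exact hS _ _ h.2.symm
        · exact h ▸ hvS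
        · exact h ▸ hS _ _ hw
        · exact h ▸ hS _ _ hx
    omega
  rw [hN] at hbig
  by_cases k1 : G.Adj w a ∧ G.Adj w a'
  · exact ho.rot.vertex k1.1 k1.2 hvw hvw'
  by_cases k2 : G.Adj w b ∧ G.Adj w b'
  · exact ho.rot.rot.vertex k2.1 k2.2 hvw hvw'
  by_cases k3 : G.Adj w c ∧ G.Adj w c'
  · exact ho.vertex k3.1 k3.2 hvw hvw'
  have := nb_oct_le k1 k2 k3
  omega

lemma minor_of_clique {C : Finset V} (hC : C.card = 6)
    (h : ∀ a ∈ C, ∀ b ∈ C, a ≠ b → G.Adj a b) : G.HasCompleteMinor 6 := by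
  have e := (Finset.equivFinOfCardEq hC).symm
  refine minor_of_fun (fun i => {(e i : V)}) (fun i => conn_single _) ?_
  intro i j hij
  have hne : (e i : V) ≠ e j := by
    intro h
    exact hij.ne (e.injective (Subtype.ext h))
  exact ⟨by simpa using hne, _, rfl, _, rfl, h _ (e i).2 _ (e j).2 hne⟩

lemma mader_five [Fintype V] {v : V} (hv : (nb G Finset.univ v).card = 5)
    (h4 : ∀ a ∈ nb G Finset.univ v, 4 ≤ (nb G (nb G Finset.univ v) a).card) :
    G.HasCompleteMinor 6 := by
  have hvn : v ∉ nb G Finset.univ v := by simp [mem_nb]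
  have key : ∀ a ∈ nb G Finset.univ v, ∀ b ∈ nb G Finset.univ v, a ≠ b → G.Adj a b := by
    intro a ha b hb hab
    have hsub : nb G (nb G Finset.univ v) a ⊆ (nb G Finset.univ v).erase a := by
      intro w hw
      obtain ⟨h1, h2⟩ := mem_nb.1 hw
      exact Finset.mem_erase.2 ⟨h2.ne', h1⟩
    have hcard : ((nb G Finset.univ v).erase a).card = 4 := by
      rw [Finset.card_erase_of_mem ha, hv]
    have heq := Finset.eq_of_subset_of_card_le hsub (by rw [hcard]; exact h4 a ha)
    have : b ∈ (nb G Finset.univ v).erase a := Finset.mem_erase.2 ⟨hab.symm, hb⟩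
    rw [← heq] at this
    exact (mem_nb.1 this).2
  refine minor_of_clique (C := insert v (nb G Finset.univ v)) ?_ ?_
  · rw [Finset.card_insert_of_notMem hvn, hv]
  · intro a ha b hb hab
    rcases Finset.mem_insert.1 ha with rfl | ha <;> rcases Finset.mem_insert.1 hb with rfl | hb
    · exact absurd rfl hab
    · exact (mem_nb.1 hb).2
    · exact (mem_nb.1 ha).2.symm
    · exact key a ha b hb hab

lemma sum_deg_support [Fintype V] {S : Finset V} (hS : ∀ u w, G.Adj u w → u ∈ S) :
    ∑ u ∈ S, (nb G Finset.univ u).card = 2 * G.edgeFinset.card := by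
  rw [← sum_deg]
  apply Finset.sum_subset (Finset.subset_univ S)
  intro u _ hu
  rw [Finset.card_eq_zero, Finset.eq_empty_iff_forall_notMem]
  intro w hw
  exact hu (hS _ _ (mem_nb.1 hw).2)

/-- The Mader bound for `K_6` minors, for order at most 11. -/
theorem mader [Fintype V] (n : ℕ) (h5 : 5 ≤ n) : n ≤ 11 → ∀ (G : SimpleGraph V) (S : Finset V),
    S.card = n → (∀ u w, G.Adj u w → u ∈ S) → 4 * n ≤ G.edgeFinset.card + 9 →
    G.HasCompleteMinor 6 := by
  induction n, h5 using Nat.le_induction with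
  | base =>
    intro _ G S hc hS hE
    exfalso
    have h1 := sum_deg_support hS
    have h2 : ∑ u ∈ S, (nb G Finset.univ u).card ≤ ∑ u ∈ S, 4 := by
      apply Finset.sum_le_sum
      intro u hu
      have hsub : nb G Finset.univ u ⊆ S.erase u := by
        intro w hw
        have hw := (mem_nb.1 hw).2
        exact Finset.mem_erase.2 ⟨hw.ne', hS _ _ hw.symm⟩
      have := Finset.card_le_card hsub
      rw [Finset.card_erase_of_mem hu] at this
      omega
    rw [Finset.sum_const, smul_eq_mul] at h2
    omega
  | succ n hn ih =>
    intro hn11 G' S hc hS' hE'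
    obtain ⟨G, hle, hE⟩ := exists_sub (G := G') (4 * (n + 1) - 9) (by omega)
    refine minor_mono hle ?_
    have hS : ∀ u w, G.Adj u w → u ∈ S := fun u w h => hS' u w (hle h)
    by_cases hd : ∃ v ∈ S, (nb G Finset.univ v).card ≤ 4
    · obtain ⟨v, hv, hd⟩ := hd
      obtain ⟨H, hHG, hHS, hHE⟩ := exists_del hS v
      refine minor_mono hHG (ih (by omega) _ (S.erase v) ?_ hHS ?_)
      · rw [Finset.card_erase_of_mem hv]; omega
      · omega
    by_cases he : ∃ x y, G.Adj x y ∧ (nb G (nb G Finset.univ x) y).card ≤ 3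
    · obtain ⟨x, y, hxy, hcm⟩ := he
      refine contr_minor hxy (ih (by omega) _ (S.erase y) ?_ (contr_support hS hxy) ?_)
      · rw [Finset.card_erase_of_mem (hS _ _ hxy.symm)]; omega
      · have := contr_edges hxy
        omega
    push Not at hd he
    have h4 : ∀ v, ∀ a ∈ nb G Finset.univ v, 4 ≤ (nb G (nb G Finset.univ v) a).card :=
      fun v a ha => he v a (mem_nb.1 ha).2
    by_cases hfive : ∃ v ∈ S, (nb G Finset.univ v).card = 5
    · obtain ⟨v, -, hv⟩ := hfive
      exact mader_five hv (h4 v)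
    push Not at hfive
    have h6 : ∀ u ∈ S, 6 ≤ (nb G Finset.univ u).card := by
      intro u hu
      have := hd u hu
      have := hfive u hu
      omega
    obtain ⟨v, hv, hv6⟩ : ∃ v ∈ S, (nb G Finset.univ v).card = 6 := by
      by_contra hcon
      push Not at hcon
      have h1 := sum_deg_support hS
      have h2 : ∑ u ∈ S, 7 ≤ ∑ u ∈ S, (nb G Finset.univ u).card := by
        apply Finset.sum_le_sum
        intro u hu
        have := h6 u hu
        have := hcon u hu
        omega
      rw [Finset.sum_const, smul_eq_mul] at h2
      omega
    exact mader_six hS (by omega) h6 hv hv6 (h4 v)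

end mader

section main

variable {V : Type*} {G : SimpleGraph V}

lemma five_plus {x y z1 z2 z3 : V} {X R : Set V} (hX : (G.induce X).Connected)
    (hR : (G.induce R).Connected) (hx : x ∈ X)
    (z12 : G.Adj z1 z2) (z13 : G.Adj z1 z3) (z23 : G.Adj z2 z3)
    (y1 : G.Adj z1 y) (y2 : G.Adj z2 y) (y3 : G.Adj z3 y)
    (x1 : G.Adj z1 x) (x2 : G.Adj z2 x) (x3 : G.Adj z3 x)
    (n1 : z1 ∉ X) (n2 : z2 ∉ X) (n3 : z3 ∉ X) (ny : y ∉ X)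
    (hy : ∃ s ∈ X, G.Adj y s)
    (m1 : z1 ∉ R) (m2 : z2 ∉ R) (m3 : z3 ∉ R) (my : y ∉ R) (hd : Disjoint X R)
    (r1 : ∃ s ∈ R, G.Adj z1 s) (r2 : ∃ s ∈ R, G.Adj z2 s) (r3 : ∃ s ∈ R, G.Adj z3 s)
    (ry : ∃ s ∈ R, G.Adj y s) (rx : ∃ u ∈ X, ∃ s ∈ R, G.Adj u s) :
    G.HasCompleteMinor 6 := by
  have ts : ∀ {u w : V}, G.Adj u w → Tch G ({u} : Set V) {w} := by
    intro u w h
    exact ⟨by simpa using h.ne, u, rfl, w, rfl, h⟩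
  have tt : ∀ {u : V} {T : Set V}, u ∉ T → (∃ s ∈ T, G.Adj u s) → Tch G ({u} : Set V) T := by
    intro u T h1 h2
    exact ⟨by simpa using h1, u, rfl, h2⟩
  exact mk6 (conn_single z1) (conn_single z2) (conn_single z3) (conn_single y) hX hR
    (ts z12) (ts z13) (ts y1) (tt n1 ⟨x, hx, x1⟩) (tt m1 r1) (ts z23) (ts y2)
    (tt n2 ⟨x, hx, x2⟩) (tt m2 r2) (ts y3) (tt n3 ⟨x, hx, x3⟩) (tt m3 r3)
    (tt ny hy) (tt my ry) ⟨hd, rx⟩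

lemma sum_nb_le_of_pairs {B : Finset V} (hB : B.card = 5) {x y p q : V} (hx : x ∈ B) (hy : y ∈ B)
    (hp : p ∈ B) (hq : q ∈ B) (hxy : x ≠ y) (hpq : p ≠ q) (h1 : ¬ G.Adj x y) (h2 : ¬ G.Adj p q)
    (h3 : ¬ (p = x ∧ q = y)) (h4 : ¬ (p = y ∧ q = x)) :
    ∑ b ∈ B, (nb G B b).card ≤ 16 := by
  have e : ∑ b ∈ B, (nb G B b).card = ((B ×ˢ B).filter (fun t => G.Adj t.1 t.2)).card := by
    simp_rw [card_nb_sum]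
    rw [Finset.card_filter, Finset.sum_product]
  have hsub : (B ×ˢ B).filter (fun t => G.Adj t.1 t.2) ⊆
      B.offDiag \ {(x, y), (y, x), (p, q), (q, p)} := by
    rintro ⟨s, t⟩ hst
    simp only [Finset.mem_filter, Finset.mem_product] at hst
    simp only [Finset.mem_sdiff, Finset.mem_offDiag, Finset.mem_insert, Finset.mem_singleton,
      Prod.mk.injEq]
    refine ⟨⟨hst.1.1, hst.1.2, hst.2.ne⟩, ?_⟩
    rintro (⟨rfl, rfl⟩ | ⟨rfl, rfl⟩ | ⟨rfl, rfl⟩ | ⟨rfl, rfl⟩)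
    · exact h1 hst.2
    · exact h1 hst.2.symm
    · exact h2 hst.2
    · exact h2 hst.2.symm
  have h4' : ({(x, y), (y, x), (p, q), (q, p)} : Finset (V × V)).card = 4 := by
    rw [Finset.card_insert_of_notMem, Finset.card_eq_three.2 ⟨_, _, _, ?_, ?_, ?_, rfl⟩]
    all_goals
      simp only [Finset.mem_insert, Finset.mem_singleton, Prod.mk.injEq, ne_eq]
      grind
  have hc := Finset.card_le_card hsub
  rw [Finset.card_sdiff_of_subset, Finset.offDiag_card, h4', hB] at hc
  · omega
  · intro t ht
    simp only [Finset.mem_insert, Finset.mem_singleton] at ht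
    rcases ht with rfl | rfl | rfl | rfl <;> simp [Finset.mem_offDiag, *, Ne.symm]

variable [Fintype V]

/-- everything outside the closed neighbourhood -/
noncomputable def far (G : SimpleGraph V) (v : V) : Finset V :=
  Finset.univ \ insert v (nb G Finset.univ v)

lemma mem_far {v w : V} : w ∈ far G v ↔ w ≠ v ∧ ¬ G.Adj v w := by
  simp [far, mem_nb]

lemma univ_split (v : V) : (Finset.univ : Finset V) = {v} ∪ (nb G Finset.univ v ∪ far G v) := by
  ext w
  simp only [Finset.mem_univ, Finset.mem_union, Finset.mem_singleton, mem_nb, mem_far, true_and,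
    true_iff]
  tauto

lemma disj1 (v : V) : Disjoint (nb G Finset.univ v) (far G v) := by
  rw [Finset.disjoint_left]
  intro w h1 h2
  exact (mem_far.1 h2).2 (mem_nb.1 h1).2

lemma disj2 (v : V) : Disjoint {v} (nb G Finset.univ v ∪ far G v) := by
  simp [mem_nb, mem_far]

lemma deg_split (v w : V) : (nb G Finset.univ w).card = (if G.Adj v w then 1 else 0) +
    (nb G (nb G Finset.univ v) w).card + (nb G (far G v) w).card := by
  conv_lhs => rw [univ_split (G := G) v]
  rw [nb_union (disj2 v), nb_union (disj1 v), card_nb_sum {v} w, Finset.sum_singleton,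
    G.adj_comm w v]
  ring

lemma deg_near {v a : V} (h : a ∈ nb G Finset.univ v) : (nb G Finset.univ a).card = 1 +
    (nb G (nb G Finset.univ v) a).card + (nb G (far G v) a).card := by
  rw [deg_split v a, if_pos (mem_nb.1 h).2]

lemma deg_far {v b : V} (h : b ∈ far G v) : (nb G Finset.univ b).card =
    (nb G (nb G Finset.univ v) b).card + (nb G (far G v) b).card := by
  rw [deg_split v b, if_neg (mem_far.1 h).2, zero_add]

lemma card_far {v : V} : (far G v).card + (nb G Finset.univ v).card + 1 = Fintype.card V := by
  rw [← Finset.card_univ]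
  conv_rhs => rw [univ_split (G := G) v]
  rw [Finset.card_union_of_disjoint (disj2 v), Finset.card_union_of_disjoint (disj1 v)]
  simp
  ring

lemma sum_split (v : V) (f : V → ℕ) :
    ∑ u, f u = f v + ∑ a ∈ nb G Finset.univ v, f a + ∑ b ∈ far G v, f b := by
  rw [univ_split (G := G) v, Finset.sum_union (disj2 v), Finset.sum_union (disj1 v),
    Finset.sum_singleton, ← univ_split]
  ring

lemma count {v : V} (hs : ∑ u, (nb G Finset.univ u).card = 76)
    (hv : (nb G Finset.univ v).card = 6) :
    ∑ a ∈ nb G Finset.univ v, (nb G (nb G Finset.univ v) a).card +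
    2 * ∑ b ∈ far G v, (nb G (nb G Finset.univ v) b).card +
    ∑ b ∈ far G v, (nb G (far G v) b).card = 64 := by
  rw [sum_split v, hv, Finset.sum_congr rfl (fun a ha => deg_near ha),
    Finset.sum_congr rfl (fun b hb => deg_far hb), Finset.sum_add_distrib, Finset.sum_add_distrib,
    Finset.sum_add_distrib, double_count (nb G Finset.univ v) (far G v), Finset.sum_const, hv]
    at hs
  simp only [smul_eq_mul] at hs
  omega

lemma nb_sub_erase (S : Finset V) (u : V) : nb G S u ⊆ S.erase u := by
  intro w hw
  obtain ⟨h1, h2⟩ := mem_nb.1 hw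
  exact Finset.mem_erase.2 ⟨h2.ne', h1⟩

lemma nb_le_pred {S : Finset V} {u : V} (h : u ∈ S) : (nb G S u).card + 1 ≤ S.card := by
  have h1 := Finset.card_le_card (nb_sub_erase (G := G) S u)
  have h2 := Finset.card_erase_add_one h
  omega

/-- If the vertices far from `v` form a clique up to one missing edge, there is a minor. -/
lemma near_clique {v : V} (hcard : Fintype.card V = 12)
    (hdeg : ∀ u, 6 ≤ (nb G Finset.univ u).card) (hs : ∑ u, (nb G Finset.univ u).card = 76)
    (hv : (nb G Finset.univ v).card = 6)
    (h3 : ∀ a ∈ nb G Finset.univ v, 3 ≤ (nb G (nb G Finset.univ v) a).card)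
    {x y : V} (hx : x ∈ far G v) (hy : y ∈ far G v) (hxy : x ≠ y)
    (hpair : ∀ p ∈ far G v, ∀ q ∈ far G v, p ≠ q → G.Adj p q ∨ (p = x ∧ q = y) ∨ (p = y ∧ q = x)) :
    G.HasCompleteMinor 6 := by
  have hB5 : (far G v).card = 5 := by
    have := card_far (G := G) (v := v)
    omega
  have hcnt := count hs hv
  set A := nb G Finset.univ v with hA
  have hvA : ∀ a ∈ A, G.Adj v a := fun a ha => (mem_nb.1 ha).2
  have hAB : ∀ a ∈ A, a ∉ far G v := fun a ha hb => (mem_far.1 hb).2 (hvA a ha)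
  have hvB : v ∉ far G v := fun h => (mem_far.1 h).1 rfl
  -- the three other vertices
  set Z := ((far G v).erase x).erase y with hZ
  have hy' : y ∈ (far G v).erase x := Finset.mem_erase.2 ⟨hxy.symm, hy⟩
  have hZ3 : Z.card = 3 := by
    rw [hZ, Finset.card_erase_of_mem hy', Finset.card_erase_of_mem hx, hB5]
  have hZm : ∀ z ∈ Z, z ∈ far G v ∧ z ≠ x ∧ z ≠ y := by
    intro z hz
    simp only [hZ, Finset.mem_erase] at hz
    tauto
  have hBsum : ∀ f : V → ℕ, ∑ b ∈ far G v, f b = f x + (f y + ∑ z ∈ Z, f z) := by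
    intro f
    rw [← Finset.add_sum_erase _ _ hx, ← Finset.add_sum_erase _ _ hy']
  have dA2 : ∀ b ∈ far G v, 2 ≤ (nb G A b).card := by
    intro b hb
    have h1 := hdeg b
    have h2 := deg_far hb
    rw [← hA] at h2
    have h3 := nb_le_pred (G := G) hb
    omega
  obtain ⟨z1, z2, z3, z12, z13, z23, hZe⟩ := Finset.card_eq_three.1 hZ3
  obtain ⟨b1, x1, y1⟩ := hZm z1 (by rw [hZe]; simp)
  obtain ⟨b2, x2, y2⟩ := hZm z2 (by rw [hZe]; simp)
  obtain ⟨b3, x3, y3⟩ := hZm z3 (by rw [hZe]; simp)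
  have zadj : ∀ z ∈ far G v, z ≠ x → z ≠ y → ∀ w ∈ far G v, z ≠ w → G.Adj z w := by
    intro z hz h1 h2 w hw h
    rcases hpair z hz w hw h with h | h | h
    · exact h
    · exact absurd h.1 h1
    · exact absurd h.1 h2
  have build : ∀ (X : Set V) (T : Finset V), (G.induce X).Connected → x ∈ X →
      (∀ s ∈ X, s = x ∨ s ∈ A) → (∃ s ∈ X, G.Adj y s) → T ⊆ A → (∀ t ∈ T, t ∉ X) →
      (∃ t ∈ T, G.Adj y t) → (∀ z ∈ Z, ∃ t ∈ T, G.Adj z t) →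
      (∃ u ∈ X, ∃ s ∈ (insert v (T : Set V) : Set V), G.Adj u s) → G.HasCompleteMinor 6 := by
    intro X T hX hxX hXs hyX hTA hTX hyT hzT hXT
    have hR : (G.induce (insert v (T : Set V) : Set V)).Connected :=
      conn_star (fun a ha => hvA a (hTA ha))
    have nR : ∀ b ∈ far G v, b ∉ (insert v (T : Set V) : Set V) := by
      intro b hb h
      rcases Set.mem_insert_iff.1 h with rfl | h
      · exact hvB hb
      · exact hAB b (hTA h) hb
    have nX : ∀ b ∈ far G v, b ≠ x → b ∉ X := by
      intro b hb hbx h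
      rcases hXs b h with h | h
      · exact hbx h
      · exact hAB b h hb
    have up : ∀ b, (∃ t ∈ T, G.Adj b t) → ∃ s ∈ (insert v (T : Set V) : Set V), G.Adj b s := by
      rintro b ⟨t, ht, h⟩
      exact ⟨t, Set.mem_insert_of_mem _ ht, h⟩
    refine five_plus hX hR hxX (zadj z1 b1 x1 y1 z2 b2 z12) (zadj z1 b1 x1 y1 z3 b3 z13)
      (zadj z2 b2 x2 y2 z3 b3 z23) (zadj z1 b1 x1 y1 y hy y1) (zadj z2 b2 x2 y2 y hy y2)
      (zadj z3 b3 x3 y3 y hy y3) (zadj z1 b1 x1 y1 x hx x1) (zadj z2 b2 x2 y2 x hx x2)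
      (zadj z3 b3 x3 y3 x hx x3) (nX _ b1 x1) (nX _ b2 x2) (nX _ b3 x3) (nX _ hy hxy.symm) hyX
      (nR _ b1) (nR _ b2) (nR _ b3) (nR _ hy) ?_ (up _ (hzT z1 (by rw [hZe]; simp)))
      (up _ (hzT z2 (by rw [hZe]; simp))) (up _ (hzT z3 (by rw [hZe]; simp))) (up _ hyT) hXT
    rw [Set.disjoint_left]
    intro s hs hs'
    rcases Set.mem_insert_iff.1 hs' with rfl | h
    · rcases hXs _ hs with h | h
      · exact hvB (h ▸ hx)
      · exact G.irrefl (hvA _ h)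
    · exact hTX s h hs
  have someA : ∀ b ∈ far G v, ∃ t ∈ A, G.Adj b t := by
    intro b hb
    have h := dA2 b hb
    obtain ⟨t, ht⟩ := Finset.card_pos.1 (by omega : 0 < (nb G A b).card)
    exact ⟨t, mem_nb.1 ht⟩
  by_cases hadj : G.Adj x y
  · refine build {x} A (conn_single x) rfl (fun s hs => Or.inl hs) ⟨x, rfl, hadj.symm⟩
      (Finset.Subset.refl _) ?_ (someA y hy) (fun z hz => someA z (hZm z hz).1) ?_
    · rintro t ht rfl
      exact hAB t ht hx
    · obtain ⟨t, ht, h⟩ := someA x hx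
      exact ⟨x, rfl, t, Set.mem_insert_of_mem _ ht, h⟩
  have nbBx : (nb G (far G v) x).card ≤ 3 := by
    rw [← hZ3]
    apply Finset.card_le_card
    intro w hw
    obtain ⟨h1, h2⟩ := mem_nb.1 hw
    refine Finset.mem_erase.2 ⟨?_, Finset.mem_erase.2 ⟨h2.ne', h1⟩⟩
    rintro rfl
    exact hadj h2
  have nbBy : (nb G (far G v) y).card ≤ 3 := by
    rw [← hZ3]
    apply Finset.card_le_card
    intro w hw
    obtain ⟨h1, h2⟩ := mem_nb.1 hw
    refine Finset.mem_erase.2 ⟨h2.ne', Finset.mem_erase.2 ⟨?_, h1⟩⟩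
    rintro rfl
    exact hadj h2.symm
  have dAx : 3 ≤ (nb G A x).card := by
    have h1 := hdeg x
    have h2 := deg_far hx
    rw [← hA] at h2
    omega
  have dAy : 3 ≤ (nb G A y).card := by
    have h1 := hdeg y
    have h2 := deg_far hy
    rw [← hA] at h2
    omega
  have avoid1 : ∀ a b, 2 ≤ (nb G A b).card → ∃ t ∈ A.erase a, G.Adj b t := by
    intro a b h
    by_contra hcon
    push Not at hcon
    have hsub : nb G A b ⊆ {a} := by
      intro w hw
      obtain ⟨k1, k2⟩ := mem_nb.1 hw
      rw [Finset.mem_singleton]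
      by_contra hne
      exact hcon w (Finset.mem_erase.2 ⟨hne, k1⟩) k2
    have := Finset.card_le_card hsub
    rw [Finset.card_singleton] at this
    omega
  have avoid2 : ∀ a a' b, 3 ≤ (nb G A b).card → ∃ t ∈ (A.erase a).erase a', G.Adj b t := by
    intro a a' b h
    by_contra hcon
    push Not at hcon
    have hsub : nb G A b ⊆ {a, a'} := by
      intro w hw
      obtain ⟨k1, k2⟩ := mem_nb.1 hw
      rw [Finset.mem_insert, Finset.mem_singleton]
      by_contra hne
      push Not at hne
      exact hcon w (Finset.mem_erase.2 ⟨hne.2, Finset.mem_erase.2 ⟨hne.1, k1⟩⟩) k2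
    have := Finset.card_le_card hsub
    have := Finset.card_le_two (a := a) (b := a')
    omega
  by_cases hcom : ∃ a ∈ A, G.Adj x a ∧ G.Adj y a
  · obtain ⟨a, ha, hxa, hya⟩ := hcom
    refine build {x, a} (A.erase a) (conn_pair hxa) (by simp) ?_ ⟨a, by simp, hya⟩
      (Finset.erase_subset _ _) ?_ (avoid1 a y (dA2 y hy))
      (fun z hz => avoid1 a z (dA2 z (hZm z hz).1)) ⟨a, by simp, v, by simp, (hvA a ha).symm⟩
    · intro s hs
      rcases hs with h | h
      · exact Or.inl h
      · right
        rw [Set.mem_singleton_iff.1 h]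
        exact ha
    · intro t ht h
      obtain ⟨t1, t2⟩ := Finset.mem_erase.1 ht
      rcases h with h | h
      · exact hAB t t2 (h ▸ hx)
      · exact t1 h
  by_cases hpath : ∃ a ∈ A, ∃ a' ∈ A, G.Adj x a ∧ G.Adj y a' ∧ G.Adj a a' ∧
      ∀ z ∈ Z, ∃ t ∈ (A.erase a).erase a', G.Adj z t
  · obtain ⟨a, ha, a', ha', hxa, hya, haa, hz⟩ := hpath
    refine build {a', a, x} ((A.erase a).erase a')
      (conn_insert (conn_pair hxa.symm) (by simp) haa.symm)
      (by simp) ?_ ⟨a', by simp, hya⟩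
      ((Finset.erase_subset _ _).trans (Finset.erase_subset _ _)) ?_ (avoid2 a a' y dAy)
      hz ⟨a, by simp, v, by simp, (hvA a ha).symm⟩
    · intro s hs
      rcases hs with h | h | h
      · right; rw [h]; exact ha'
      · right; rw [h]; exact ha
      · exact Or.inl h
    · intro t ht h
      obtain ⟨t1, t2⟩ := Finset.mem_erase.1 ht
      obtain ⟨t3, t4⟩ := Finset.mem_erase.1 t2
      rcases h with h | h | h
      · exact t1 h
      · exact t3 h
      · exact hAB t t4 (h ▸ hx)
  exfalso
  push Not at hcom hpath
  set PX := nb G A x with hPX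
  set PY := nb G A y with hPY
  have hdj : Disjoint PX PY := by
    rw [Finset.disjoint_left]
    intro a h1 h2
    exact hcom a (mem_nb.1 h1).1 (mem_nb.1 h1).2 (mem_nb.1 h2).2
  have hsubA : PX ∪ PY ⊆ A := Finset.union_subset (Finset.filter_subset _ _)
    (Finset.filter_subset _ _)
  have hle := Finset.card_le_card hsubA
  rw [Finset.card_union_of_disjoint hdj] at hle
  have hX3 : PX.card = 3 := by omega
  have hY3 : PY.card = 3 := by omega
  have hUA : PX ∪ PY = A := by
    apply Finset.eq_of_subset_of_card_le hsubA
    rw [Finset.card_union_of_disjoint hdj]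
    omega
  have nbA : ∀ u, (nb G A u).card = (nb G PX u).card + (nb G PY u).card := by
    intro u
    rw [← nb_union hdj, hUA]
  -- pairs inject into the bad vertices
  set P := (PX ×ˢ PY).filter (fun t => G.Adj t.1 t.2) with hP
  have hPc : ∑ a ∈ PX, (nb G PY a).card = P.card := by
    simp_rw [card_nb_sum]
    rw [hP, Finset.card_filter, Finset.sum_product]
  have hex : ∀ t ∈ P, ∃ z ∈ Z, nb G A z = {t.1, t.2} := by
    rintro ⟨a, a'⟩ ht
    simp only [hP, Finset.mem_filter, Finset.mem_product] at ht
    obtain ⟨⟨ha, ha'⟩, haa⟩ := ht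
    obtain ⟨z, hz, hzt⟩ := hpath a (mem_nb.1 ha).1 a' (mem_nb.1 ha').1 (mem_nb.1 ha).2
      (mem_nb.1 ha').2 haa
    refine ⟨z, hz, ?_⟩
    apply Finset.eq_of_subset_of_card_le
    · intro w hw
      obtain ⟨k1, k2⟩ := mem_nb.1 hw
      rw [Finset.mem_insert, Finset.mem_singleton]
      by_contra hne
      push Not at hne
      exact hzt w (Finset.mem_erase.2 ⟨hne.2, Finset.mem_erase.2 ⟨hne.1, k1⟩⟩) k2
    · exact Finset.card_le_two.trans (dA2 z (hZm z hz).1)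
  have : Nonempty V := ⟨v⟩
  choose! f hfZ hf using hex
  have hinj : Set.InjOn f (P : Set (V × V)) := by
    rintro ⟨a, a'⟩ h1 ⟨c, c'⟩ h2 hfe
    have k1 := hf _ h1
    have k2 := hf _ h2
    rw [hfe, k2] at k1
    simp only [hP, Finset.coe_filter, Finset.mem_product, Set.mem_ofPred_eq] at h1 h2
    have d1 : ∀ s ∈ PX, ∀ t ∈ PY, s ≠ t := fun s hs t ht h =>
      Finset.disjoint_left.1 hdj hs (h ▸ ht)
    have m1 : a ∈ ({c, c'} : Finset V) := by
      have : a ∈ ({a, a'} : Finset V) := by simp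
      rwa [← k1] at this
    have m2 : a' ∈ ({c, c'} : Finset V) := by
      have : a' ∈ ({a, a'} : Finset V) := by simp
      rwa [← k1] at this
    simp only [Finset.mem_insert, Finset.mem_singleton] at m1 m2
    have n1 := d1 a h1.1.1 c' h2.1.2
    have n2 := d1 c h2.1.1 a' h1.1.2
    rw [Prod.mk.injEq]
    exact ⟨m1.resolve_right n1, m2.resolve_left n2.symm⟩
  have himg : P.image f ⊆ Z := by
    intro z hz
    obtain ⟨t, ht, rfl⟩ := Finset.mem_image.1 hz
    exact hfZ t ht
  have hic : (P.image f).card = P.card := Finset.card_image_of_injOn hinj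
  have hPle : P.card ≤ 3 := by
    rw [← hic, ← hZ3]
    exact Finset.card_le_card himg
  have subA : ∀ a ∈ PX ∪ PY, a ∈ A := fun a ha => hsubA ha
  have one_X : ∀ a ∈ PX, 1 ≤ (nb G PY a).card := by
    intro a ha
    have k1 := h3 a (subA a (Finset.mem_union_left _ ha))
    have k2 := nb_le_pred (G := G) ha
    have k3 := nbA a
    omega
  have one_Y : ∀ a ∈ PY, 1 ≤ (nb G PX a).card := by
    intro a ha
    have k1 := h3 a (subA a (Finset.mem_union_right _ ha))
    have k2 := nb_le_pred (G := G) ha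
    have k3 := nbA a
    omega
  have hPge : 3 ≤ P.card := by
    rw [← hPc]
    calc 3 = ∑ a ∈ PX, 1 := by simp [hX3]
      _ ≤ _ := Finset.sum_le_sum one_X
  have hall : P.image f = Z := Finset.eq_of_subset_of_card_le himg (by omega)
  have hz2 : ∀ z ∈ Z, (nb G A z).card ≤ 2 := by
    intro z hz
    rw [← hall] at hz
    obtain ⟨t, ht, rfl⟩ := Finset.mem_image.1 hz
    rw [hf t ht]
    exact Finset.card_le_two
  -- the sum over `A`
  have sX : ∑ a ∈ PX, (nb G A a).card ≤ 9 := by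
    have e1 : ∑ a ∈ PX, (nb G A a).card ≤ ∑ a ∈ PX, (2 + (nb G PY a).card) := by
      apply Finset.sum_le_sum
      intro a ha
      have k2 := nb_le_pred (G := G) ha
      have k3 := nbA a
      omega
    rw [Finset.sum_add_distrib, hPc, Finset.sum_const, hX3, smul_eq_mul] at e1
    omega
  have sY : ∑ a ∈ PY, (nb G A a).card ≤ 9 := by
    have e1 : ∑ a ∈ PY, (nb G A a).card ≤ ∑ a ∈ PY, (2 + (nb G PX a).card) := by
      apply Finset.sum_le_sum
      intro a ha
      have k2 := nb_le_pred (G := G) ha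
      have k3 := nbA a
      omega
    rw [Finset.sum_add_distrib, double_count PY PX, hPc, Finset.sum_const, hY3, smul_eq_mul] at e1
    omega
  have sA : ∑ a ∈ A, (nb G A a).card ≤ 18 := by
    have : ∑ a ∈ A, (nb G A a).card = ∑ a ∈ PX ∪ PY, (nb G A a).card := by rw [hUA]
    rw [this, Finset.sum_union hdj]
    omega
  have sZ : ∑ z ∈ Z, (nb G A z).card ≤ 6 := by
    calc ∑ z ∈ Z, (nb G A z).card ≤ ∑ z ∈ Z, 2 := Finset.sum_le_sum hz2
      _ = 6 := by simp [hZ3]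
  have sZB : ∑ z ∈ Z, (nb G (far G v) z).card ≤ 12 := by
    calc ∑ z ∈ Z, (nb G (far G v) z).card ≤ ∑ z ∈ Z, 4 := Finset.sum_le_sum (fun z hz => by
          have := nb_le_pred (G := G) (hZm z hz).1
          omega)
      _ = 12 := by simp [hZ3]
  rw [hBsum, hBsum, ← hPX, ← hPY] at hcnt
  omega

lemma far_sum {v : V} (hcard : Fintype.card V = 12) (hno : ¬ G.HasCompleteMinor 6)
    (hdeg : ∀ u, 6 ≤ (nb G Finset.univ u).card) (hs : ∑ u, (nb G Finset.univ u).card = 76)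
    (hv : (nb G Finset.univ v).card = 6)
    (h3 : ∀ a ∈ nb G Finset.univ v, 3 ≤ (nb G (nb G Finset.univ v) a).card) :
    ∑ b ∈ far G v, (nb G Finset.univ b).card ≤ 31 ∧
    (31 ≤ ∑ b ∈ far G v, (nb G Finset.univ b).card →
      ∀ a ∈ nb G Finset.univ v, (nb G (nb G Finset.univ v) a).card = 3) := by
  have hB5 : (far G v).card = 5 := by
    have := card_far (G := G) (v := v)
    omega
  have h16 : ∑ b ∈ far G v, (nb G (far G v) b).card ≤ 16 := by
    obtain ⟨x, hx, y, hy, hxy, hmiss⟩ : ∃ x ∈ far G v, ∃ y ∈ far G v, x ≠ y ∧ ¬ G.Adj x y := by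
      by_contra hcon
      push Not at hcon
      obtain ⟨x, hx, y, hy, hxy⟩ := Finset.one_lt_card.1 (by omega : 1 < (far G v).card)
      exact hno (near_clique hcard hdeg hs hv h3 hx hy hxy
        (fun p hp q hq hpq => Or.inl (hcon p hp q hq hpq)))
    obtain ⟨p, hp, q, hq, hpq, h⟩ : ∃ p ∈ far G v, ∃ q ∈ far G v, p ≠ q ∧
        ¬ (G.Adj p q ∨ (p = x ∧ q = y) ∨ (p = y ∧ q = x)) := by
      by_contra hcon
      push Not at hcon
      exact hno (near_clique hcard hdeg hs hv h3 hx hy hxy hcon)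
    exact sum_nb_le_of_pairs hB5 hx hy hp hq hxy hpq hmiss (fun k => h (Or.inl k))
      (fun k => h (Or.inr (Or.inl k))) (fun k => h (Or.inr (Or.inr k)))
  have hcnt := count hs hv
  have hA18 : 18 ≤ ∑ a ∈ nb G Finset.univ v, (nb G (nb G Finset.univ v) a).card := by
    calc 18 = ∑ a ∈ nb G Finset.univ v, 3 := by simp [hv]
      _ ≤ _ := Finset.sum_le_sum h3
  have hSB : ∑ b ∈ far G v, (nb G Finset.univ b).card =
      ∑ b ∈ far G v, (nb G (nb G Finset.univ v) b).card +
      ∑ b ∈ far G v, (nb G (far G v) b).card := by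
    rw [← Finset.sum_add_distrib]
    exact Finset.sum_congr rfl (fun b hb => deg_far hb)
  refine ⟨by omega, fun h31 => ?_⟩
  have heq : ∑ a ∈ nb G Finset.univ v, 3 =
      ∑ a ∈ nb G Finset.univ v, (nb G (nb G Finset.univ v) a).card := by
    rw [Finset.sum_const, hv, smul_eq_mul]
    omega
  intro a ha
  exact ((Finset.sum_eq_sum_iff_of_le h3).1 heq a ha).symm

end main

section final

variable {V : Type*} {G : SimpleGraph V}

/-- the adjacency indicator -/
noncomputable def ev (G : SimpleGraph V) (u w : V) : ℕ := if G.Adj u w then 1 else 0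

lemma ev_le (u w : V) : ev G u w ≤ 1 := by
  unfold ev
  split <;> omega

lemma ev_comm (u w : V) : ev G u w = ev G w u := by
  unfold ev
  rw [G.adj_comm]

lemma ev_self (u : V) : ev G u u = 0 := by simp [ev]

lemma ev_one {u w : V} : ev G u w = 1 ↔ G.Adj u w := by simp [ev]

lemma ev_zero {u w : V} : ev G u w = 0 ↔ ¬ G.Adj u w := by simp [ev]

lemma nb_ev (S : Finset V) (u : V) : (nb G S u).card = ∑ w ∈ S, ev G u w := card_nb_sum S u

variable [Fintype V]

lemma common3 (hcard : Fintype.card V = 12) (hsize : G.edgeFinset.card = 38)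
    (hno : ¬ G.HasCompleteMinor 6) {x y : V} (hxy : G.Adj x y) :
    3 ≤ (nb G (nb G Finset.univ x) y).card := by
  by_contra hlt
  apply hno
  apply contr_minor hxy
  have hE := contr_edges hxy
  refine mader 11 (by norm_num) le_rfl _ (Finset.univ.erase y) ?_
    (contr_support (fun _ _ _ => Finset.mem_univ _) hxy) (by omega)
  rw [Finset.card_erase_of_mem (Finset.mem_univ _), Finset.card_univ, hcard]

/-- A hypothetical counterexample. -/
structure Bad (G : SimpleGraph V) : Prop where
  hcard : Fintype.card V = 12
  hno : ¬ G.HasCompleteMinor 6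
  hdeg : ∀ u, 6 ≤ (nb G Finset.univ u).card
  hs : ∑ u, (nb G Finset.univ u).card = 76
  c3 : ∀ x y, G.Adj x y → 3 ≤ (nb G (nb G Finset.univ x) y).card

lemma Bad.far_sum (h : Bad G) {v : V} (hv : (nb G Finset.univ v).card = 6) :
    ∑ b ∈ far G v, (nb G Finset.univ b).card ≤ 31 ∧
    (31 ≤ ∑ b ∈ far G v, (nb G Finset.univ b).card →
      ∀ a ∈ nb G Finset.univ v, (nb G (nb G Finset.univ v) a).card = 3) :=
  K6.far_sum h.hcard h.hno h.hdeg h.hs hv (fun a ha => h.c3 v a (mem_nb.1 ha).2)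

lemma Bad.le7 (h : Bad G) (x : V) : (nb G Finset.univ x).card ≤ 7 := by
  by_contra hlt
  have h7 : ∀ b ∈ far G x, 7 ≤ (nb G Finset.univ b).card := by
    intro b hb
    by_contra hb7
    have hb6 : (nb G Finset.univ b).card = 6 := by
      have := h.hdeg b
      omega
    have hxb : x ∈ far G b := by
      obtain ⟨k1, k2⟩ := mem_far.1 hb
      exact mem_far.2 ⟨k1.symm, fun k => k2 k.symm⟩
    have h1 := (h.far_sum hb6).1
    rw [← Finset.add_sum_erase _ _ hxb] at h1
    have h2 := Finset.card_nsmul_le_sum ((far G b).erase x)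
      (fun b => (nb G Finset.univ b).card) 6 (fun u _ => h.hdeg u)
    have h3 := card_far (G := G) (v := b)
    have h4 := h.hcard
    rw [Finset.card_erase_of_mem hxb, smul_eq_mul] at h2
    have h5 : (far G b).card = 5 := by omega
    rw [h5] at h2
    omega
  have h1 := sum_split (G := G) x (fun u => (nb G Finset.univ u).card)
  have h2 := Finset.card_nsmul_le_sum (nb G Finset.univ x)
    (fun b => (nb G Finset.univ b).card) 6 (fun u _ => h.hdeg u)
  have h3 := Finset.card_nsmul_le_sum (far G x) (fun b => (nb G Finset.univ b).card) 7 h7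
  have h4 := card_far (G := G) (v := x)
  have h5 := h.hcard
  have h6 := h.hs
  rw [smul_eq_mul] at h2 h3
  simp only at h1
  omega

/-- vertices of degree seven -/
noncomputable def XX (G : SimpleGraph V) : Finset V :=
  Finset.univ.filter (fun u => (nb G Finset.univ u).card = 7)

/-- vertices of degree six -/
noncomputable def YY (G : SimpleGraph V) : Finset V :=
  Finset.univ.filter (fun u => (nb G Finset.univ u).card = 6)

lemma mem_XX {u : V} : u ∈ XX G ↔ (nb G Finset.univ u).card = 7 := by simp [XX]

lemma mem_YY {u : V} : u ∈ YY G ↔ (nb G Finset.univ u).card = 6 := by simp [YY]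

lemma disjXY : Disjoint (XX G) (YY G) := by
  rw [Finset.disjoint_left]
  intro u h1 h2
  rw [mem_XX] at h1
  rw [mem_YY] at h2
  omega

lemma Bad.XY (h : Bad G) : (Finset.univ : Finset V) = XX G ∪ YY G := by
  ext u
  simp only [Finset.mem_univ, Finset.mem_union, mem_XX, mem_YY, true_iff]
  have h1 := h.le7 u
  have h2 := h.hdeg u
  omega

lemma Bad.cards (h : Bad G) : (XX G).card = 4 ∧ (YY G).card = 8 := by
  have h1 : (Finset.univ : Finset V).card = 12 := by rw [Finset.card_univ, h.hcard]
  have h2 : ∑ u ∈ XX G ∪ YY G, (nb G Finset.univ u).card = 76 := by rw [← h.XY]; exact h.hs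
  rw [h.XY, Finset.card_union_of_disjoint disjXY] at h1
  rw [Finset.sum_union disjXY, Finset.sum_congr rfl (fun u hu => mem_XX.1 hu),
    Finset.sum_congr rfl (fun u hu => mem_YY.1 hu), Finset.sum_const, Finset.sum_const,
    smul_eq_mul, smul_eq_mul] at h2
  omega

lemma Bad.nbX (h : Bad G) {y : V} (hy : (nb G Finset.univ y).card = 6) :
    3 ≤ (nb G (XX G) y).card ∧ ((nb G (XX G) y).card = 3 →
      ∀ a ∈ nb G Finset.univ y, (nb G (nb G Finset.univ y) a).card = 3) := by
  have e1 : (XX G).card = (nb G (XX G) y).card + ((far G y).filter (fun u => u ∈ XX G)).card := by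
    rw [← Finset.card_union_of_disjoint]
    · congr 1
      ext u
      simp only [Finset.mem_union, mem_nb, Finset.mem_filter, mem_far]
      constructor
      · intro hu
        by_cases hadj : G.Adj y u
        · exact Or.inl ⟨hu, hadj⟩
        · refine Or.inr ⟨⟨?_, hadj⟩, hu⟩
          rintro rfl
          rw [mem_XX] at hu
          omega
      · tauto
    · rw [Finset.disjoint_left]
      intro u h1 h2
      exact (mem_far.1 (Finset.mem_filter.1 h2).1).2 (mem_nb.1 h1).2
  have e2 : ∑ b ∈ far G y, (nb G Finset.univ b).card =
      30 + ((far G y).filter (fun u => u ∈ XX G)).card := by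
    have h3 := card_far (G := G) (v := y)
    have h4 := h.hcard
    have h5 : (far G y).card = 5 := by omega
    have h6 : ∀ b ∈ far G y, (nb G Finset.univ b).card = 6 + if b ∈ XX G then 1 else 0 := by
      intro b _
      have k1 := h.le7 b
      have k2 := h.hdeg b
      split <;> rename_i k <;> rw [mem_XX] at k <;> omega
    rw [Finset.sum_congr rfl h6, Finset.sum_add_distrib, Finset.sum_const, h5,
      Finset.card_filter, smul_eq_mul]
  have h1 := h.far_sum hy
  have h2 := h.cards.1
  rw [e2] at h1
  exact ⟨by omega, fun h3 => h1.2 (by omega)⟩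

lemma Bad.structureX (h : Bad G) : (∀ y ∈ YY G, (nb G (XX G) y).card = 3) ∧
    ∑ x ∈ XX G, (nb G (XX G) x).card = 4 := by
  obtain ⟨cX, cY⟩ := h.cards
  have e1 : ∑ x ∈ XX G, (nb G (XX G) x).card + ∑ y ∈ YY G, (nb G (XX G) y).card = 28 := by
    rw [double_count (YY G) (XX G), ← Finset.sum_add_distrib]
    have : ∀ x ∈ XX G, (nb G (XX G) x).card + (nb G (YY G) x).card = 7 := by
      intro x hx
      rw [← nb_union disjXY, ← h.XY]
      exact mem_XX.1 hx
    rw [Finset.sum_congr rfl this, Finset.sum_const, cX, smul_eq_mul]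
  have hge : ∀ y ∈ YY G, 3 ≤ (nb G (XX G) y).card := fun y hy => (h.nbX (mem_YY.1 hy)).1
  have hall : ∀ y ∈ YY G, (nb G (XX G) y).card = 3 := by
    by_contra hcon
    push Not at hcon
    obtain ⟨y, hy, hne⟩ := hcon
    have hgy := hge y hy
    have hsub : nb G (XX G) y ⊆ XX G := Finset.filter_subset _ _
    have hle := Finset.card_le_card hsub
    have heq : nb G (XX G) y = XX G := Finset.eq_of_subset_of_card_le hsub (by omega)
    have hXN : XX G ⊆ nb G Finset.univ y := by
      intro x hx
      rw [← heq] at hx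
      exact mem_nb.2 ⟨Finset.mem_univ _, (mem_nb.1 hx).2⟩
    have h1 : ∀ x ∈ XX G, 1 ≤ (nb G (XX G) x).card := by
      intro x hx
      have k1 := h.c3 y x (mem_nb.1 (hXN hx)).2
      have k2 : nb G Finset.univ y = XX G ∪ (nb G Finset.univ y \ XX G) := by
        rw [Finset.union_sdiff_of_subset hXN]
      rw [k2, nb_union Finset.disjoint_sdiff] at k1
      have k3 : (nb G (nb G Finset.univ y \ XX G) x).card ≤ (nb G Finset.univ y \ XX G).card :=
        Finset.card_le_card (Finset.filter_subset _ _)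
      rw [Finset.card_sdiff_of_subset hXN, mem_YY.1 hy] at k3
      omega
    have h2 := Finset.card_nsmul_le_sum (XX G) (fun x => (nb G (XX G) x).card) 1 h1
    have h3 := Finset.card_nsmul_le_sum ((YY G).erase y) (fun x => (nb G (XX G) x).card) 3
      (fun u hu => hge u (Finset.mem_of_mem_erase hu))
    rw [← Finset.add_sum_erase _ _ hy] at e1
    rw [Finset.card_erase_of_mem hy, cY, smul_eq_mul] at h3
    rw [cX, smul_eq_mul] at h2
    omega
  refine ⟨hall, ?_⟩
  rw [Finset.sum_congr rfl hall, Finset.sum_const, cY, smul_eq_mul] at e1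
  omega

/-- the arithmetic of the matching case -/
lemma caseM (p1 p2 p3 q1 q2 q3 r1 r2 r3 b12 b13 b23 x1 x2 x3 : ℕ)
    (lp1 : p1 ≤ 1) (lp2 : p2 ≤ 1) (lp3 : p3 ≤ 1)
    (lq1 : q1 ≤ 1) (lq2 : q2 ≤ 1) (lq3 : q3 ≤ 1)
    (lr1 : r1 ≤ 1) (lr2 : r2 ≤ 1) (lr3 : r3 ≤ 1)
    (lx1 : x1 ≤ 1) (lx2 : x2 ≤ 1) (lx3 : x3 ≤ 1)
    (hp : p1 + p2 + p3 = 3) (hq : q1 + q2 + q3 = 2) (hr : r1 + r2 + r3 = 2)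
    (h1 : p1 + q1 + r1 + b12 + b13 = 3) (h2 : p2 + q2 + r2 + b12 + b23 = 3)
    (h3 : p3 + q3 + r3 + b13 + b23 = 3) (hx : 2 ≤ x1 + x2 + x3)
    (kq1 : x1 = 1 → q1 = 1 → r1 = 1 ∨ (b12 = 1 ∧ q2 = 1) ∨ (b13 = 1 ∧ q3 = 1))
    (kq2 : x2 = 1 → q2 = 1 → r2 = 1 ∨ (b12 = 1 ∧ q1 = 1) ∨ (b23 = 1 ∧ q3 = 1))
    (kq3 : x3 = 1 → q3 = 1 → r3 = 1 ∨ (b13 = 1 ∧ q1 = 1) ∨ (b23 = 1 ∧ q2 = 1))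
    (kr1 : x1 = 1 → r1 = 1 → q1 = 1 ∨ (b12 = 1 ∧ r2 = 1) ∨ (b13 = 1 ∧ r3 = 1))
    (kr2 : x2 = 1 → r2 = 1 → q2 = 1 ∨ (b12 = 1 ∧ r1 = 1) ∨ (b23 = 1 ∧ r3 = 1))
    (kr3 : x3 = 1 → r3 = 1 → q3 = 1 ∨ (b13 = 1 ∧ r1 = 1) ∨ (b23 = 1 ∧ r2 = 1)) : False := by
  have hq' : (q1 = 0 ∧ q2 = 1 ∧ q3 = 1) ∨ (q1 = 1 ∧ q2 = 0 ∧ q3 = 1) ∨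
    (q1 = 1 ∧ q2 = 1 ∧ q3 = 0) := by omega
  have hr' : (r1 = 0 ∧ r2 = 1 ∧ r3 = 1) ∨ (r1 = 1 ∧ r2 = 0 ∧ r3 = 1) ∨
    (r1 = 1 ∧ r2 = 1 ∧ r3 = 0) := by omega
  obtain rfl : p1 = 1 := by omega
  obtain rfl : p2 = 1 := by omega
  obtain rfl : p3 = 1 := by omega
  rcases hq' with ⟨rfl, rfl, rfl⟩ | ⟨rfl, rfl, rfl⟩ | ⟨rfl, rfl, rfl⟩ <;>
  rcases hr' with ⟨rfl, rfl, rfl⟩ | ⟨rfl, rfl, rfl⟩ | ⟨rfl, rfl, rfl⟩ <;>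
  omega

/-- the arithmetic of the path case -/
lemma caseP {p1 p2 p3 q1 q2 q3 r1 r2 r3 b12 b13 b23 : ℕ}
    (lp1 : p1 ≤ 1) (lp2 : p2 ≤ 1) (lp3 : p3 ≤ 1)
    (lq1 : q1 ≤ 1) (lq2 : q2 ≤ 1) (lq3 : q3 ≤ 1)
    (lr1 : r1 ≤ 1) (lr2 : r2 ≤ 1) (lr3 : r3 ≤ 1)
    (hp : p1 + p2 + p3 = 3) (hq : q1 + q2 + q3 = 3) (hr : r1 + r2 + r3 = 3)
    (h1 : p1 + q1 + r1 + b12 + b13 = 3) (h2 : p2 + q2 + r2 + b12 + b23 = 3)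
    (h3 : p3 + q3 + r3 + b13 + b23 = 3) :
    (r1 = 1 ∧ r2 = 1 ∧ r3 = 1) ∧ (b12 = 0 ∧ b13 = 0 ∧ b23 = 0) := by
  omega

set_option maxHeartbeats 1000000 in
lemma Bad.finish (h : Bad G) {x0 p q r : V} (hX : XX G = {x0, p, q, r})
    (n01 : x0 ≠ p) (n02 : x0 ≠ q) (n03 : x0 ≠ r) (n12 : p ≠ q) (n13 : p ≠ r) (n23 : q ≠ r)
    (hpq : ev G p q = 0) (hpr : ev G p r = 0) (hr : ev G x0 r = 0)
    (hcase : ev G q r = 0 ∨ (ev G q r = 1 ∧ ev G x0 q = 0)) : False := by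
  obtain ⟨hall, -⟩ := h.structureX
  have hx0 : x0 ∈ XX G := by rw [hX]; simp
  obtain ⟨y, hy, hxy⟩ : ∃ y ∈ YY G, ¬ G.Adj x0 y := by
    by_contra hcon
    push Not at hcon
    have h1 : YY G ⊆ nb G Finset.univ x0 := fun y hy =>
      mem_nb.2 ⟨Finset.mem_univ _, hcon y hy⟩
    have h2 := Finset.card_le_card h1
    rw [h.cards.2, mem_XX.1 hx0] at h2
    omega
  have hy6 := mem_YY.1 hy
  have hreg := (h.nbX hy6).2 (hall y hy)
  have hyx : ev G y x0 = 0 := ev_zero.2 (fun k => hxy k.symm)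
  have hyX := hall y hy
  rw [nb_ev, hX, Finset.sum_insert (by simp [*]), Finset.sum_insert (by simp [*]),
    Finset.sum_insert (by simp [*]), Finset.sum_singleton, hyx] at hyX
  have l1 := ev_le (G := G) y p
  have l2 := ev_le (G := G) y q
  have l3 := ev_le (G := G) y r
  have ayp : G.Adj y p := ev_one.1 (by omega)
  have ayq : G.Adj y q := ev_one.1 (by omega)
  have ayr : G.Adj y r := ev_one.1 (by omega)
  have hfar : x0 ∈ far G y := by
    refine mem_far.2 ⟨?_, fun k => hxy k.symm⟩
    rintro rfl
    exact Finset.disjoint_left.1 disjXY hx0 hy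
  set A := nb G Finset.univ y with hA
  have hpqr : ({p, q, r} : Finset V) ⊆ A := by
    intro u hu
    simp only [Finset.mem_insert, Finset.mem_singleton] at hu
    rcases hu with rfl | rfl | rfl <;> simp [mem_nb, *]
  have c3' : ({p, q, r} : Finset V).card = 3 := Finset.card_eq_three.2 ⟨p, q, r, n12, n13, n23, rfl⟩
  have cR : (A \ {p, q, r}).card = 3 := by
    rw [Finset.card_sdiff_of_subset hpqr, c3', hy6]
  obtain ⟨a1, a2, a3, m12, m13, m23, hR⟩ := Finset.card_eq_three.1 cR
  have hAe : A = {p, q, r, a1, a2, a3} := by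
    have : A = {p, q, r} ∪ (A \ {p, q, r}) := by rw [Finset.union_sdiff_of_subset hpqr]
    rw [this, hR]
    ext u
    simp only [Finset.mem_union, Finset.mem_insert, Finset.mem_singleton]
    tauto
  have hai : ∀ a ∈ A \ {p, q, r}, a ∈ A ∧ a ≠ p ∧ a ≠ q ∧ a ≠ r ∧
      (nb G Finset.univ a).card = 6 := by
    intro a ha
    simp only [Finset.mem_sdiff, Finset.mem_insert, Finset.mem_singleton, not_or] at ha
    obtain ⟨h1, h2, h3, h4⟩ := ha
    refine ⟨h1, h2, h3, h4, ?_⟩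
    have ha0 : a ≠ x0 := by
      rintro rfl
      exact hxy (mem_nb.1 h1).2.symm
    have h5 : a ∉ XX G := by
      rw [hX]
      simp [*]
    rw [mem_XX] at h5
    have h6 := h.le7 a
    have h7 := h.hdeg a
    omega
  rw [hR] at hai
  obtain ⟨A1, p1, q1, r1, d1⟩ := hai a1 (by simp)
  obtain ⟨A2, p2, q2, r2, d2⟩ := hai a2 (by simp)
  obtain ⟨A3, p3, q3, r3, d3⟩ := hai a3 (by simp)
  have sumA : ∀ u, (nb G A u).card =
      ev G u p + (ev G u q + (ev G u r + (ev G u a1 + (ev G u a2 + ev G u a3)))) := by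
    intro u
    rw [nb_ev, hAe, Finset.sum_insert, Finset.sum_insert, Finset.sum_insert, Finset.sum_insert,
      Finset.sum_insert, Finset.sum_singleton]
    all_goals
      simp only [Finset.mem_insert, Finset.mem_singleton]
      grind
  have K : ∀ a ∈ A, (nb G Finset.univ a).card = 6 → ∀ u ∈ A, ev G x0 a = 1 → ev G u a = 1 →
      ev G x0 u = 0 → ∃ w ∈ A, ev G w a = 1 ∧ ev G w u = 1 := by
    intro a ha ha6 u hu h1 h2 h3
    rw [ev_one] at h1 h2
    rw [ev_zero] at h3
    by_contra hcon
    push Not at hcon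
    have k1 := h.c3 a u h2.symm
    have k2 := deg_near ha
    rw [ha6, ← hA, hreg a ha] at k2
    have hx0m : x0 ∈ nb G (far G y) a := mem_nb.2 ⟨hfar, h1.symm⟩
    have hsub : nb G (nb G Finset.univ a) u ⊆ insert y ((nb G (far G y) a).erase x0) := by
      intro w hw
      obtain ⟨w1, w2⟩ := mem_nb.1 hw
      have w3 := (mem_nb.1 w1).2
      rw [Finset.mem_insert]
      by_cases hwy : w = y
      · exact Or.inl hwy
      · right
        refine Finset.mem_erase.2 ⟨?_, mem_nb.2 ⟨mem_far.2 ⟨hwy, ?_⟩, w3⟩⟩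
        · rintro rfl
          exact h3 w2.symm
        · intro hyw
          exact hcon w (mem_nb.2 ⟨Finset.mem_univ _, hyw⟩) (ev_one.2 w3.symm) (ev_one.2 w2.symm)
    have k3 := Finset.card_le_card hsub
    have k4 := Finset.card_insert_le y ((nb G (far G y) a).erase x0)
    rw [Finset.card_erase_of_mem hx0m] at k4
    omega
  have K' : ∀ a ∈ A, (nb G Finset.univ a).card = 6 → ∀ u ∈ A, ev G x0 a = 1 → ev G u a = 1 →
      ev G x0 u = 0 → (ev G p a = 1 ∧ ev G p u = 1) ∨ (ev G q a = 1 ∧ ev G q u = 1) ∨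
      (ev G r a = 1 ∧ ev G r u = 1) ∨ (ev G a1 a = 1 ∧ ev G a1 u = 1) ∨
      (ev G a2 a = 1 ∧ ev G a2 u = 1) ∨ (ev G a3 a = 1 ∧ ev G a3 u = 1) := by
    intro a ha ha6 u hu h1 h2 h3
    obtain ⟨w, hw, hw2⟩ := K a ha ha6 u hu h1 h2 h3
    rw [hAe] at hw
    simp only [Finset.mem_insert, Finset.mem_singleton] at hw
    rcases hw with rfl | rfl | rfl | rfl | rfl | rfl
    · exact Or.inl hw2
    · exact Or.inr (Or.inl hw2)
    · exact Or.inr (Or.inr (Or.inl hw2))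
    · exact Or.inr (Or.inr (Or.inr (Or.inl hw2)))
    · exact Or.inr (Or.inr (Or.inr (Or.inr (Or.inl hw2))))
    · exact Or.inr (Or.inr (Or.inr (Or.inr (Or.inr hw2))))
  have Ap : p ∈ A := hpqr (by simp)
  have Aq : q ∈ A := hpqr (by simp)
  have Ar : r ∈ A := hpqr (by simp)
  have D : 3 ≤ (nb G A x0).card := by
    have k1 := deg_far hfar
    have k2 := nb_le_pred (G := G) hfar
    have k3 := card_far (G := G) (v := y)
    have k4 := h.hcard
    rw [mem_XX.1 hx0, ← hA] at k1
    rw [← hA] at k3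
    omega
  have Rp := hreg p Ap
  have Rq := hreg q Aq
  have Rr := hreg r Ar
  have R1 := hreg a1 A1
  have R2 := hreg a2 A2
  have R3 := hreg a3 A3
  have Kq1 := K' a1 A1 d1 q Aq
  have Kq2 := K' a2 A2 d2 q Aq
  have Kq3 := K' a3 A3 d3 q Aq
  have Kr1 := K' a1 A1 d1 r Ar
  have Kr2 := K' a2 A2 d2 r Ar
  have Kr3 := K' a3 A3 d3 r Ar
  rw [sumA] at Rp Rq Rr R1 R2 R3 D
  simp only [ev_self, ev_comm q p, ev_comm r p, ev_comm r q, ev_comm a1 p, ev_comm a1 q,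
    ev_comm a1 r, ev_comm a2 p, ev_comm a2 q, ev_comm a2 r, ev_comm a3 p, ev_comm a3 q,
    ev_comm a3 r, ev_comm a2 a1, ev_comm a3 a1, ev_comm a3 a2, hpq, hpr, hr]
    at Rp Rq Rr R1 R2 R3 D Kq1 Kq2 Kq3 Kr1 Kr2 Kr3
  have lp1 := ev_le (G := G) p a1
  have lp2 := ev_le (G := G) p a2
  have lp3 := ev_le (G := G) p a3
  have lq1 := ev_le (G := G) q a1
  have lq2 := ev_le (G := G) q a2
  have lq3 := ev_le (G := G) q a3
  have lr1 := ev_le (G := G) r a1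
  have lr2 := ev_le (G := G) r a2
  have lr3 := ev_le (G := G) r a3
  have lx1 := ev_le (G := G) x0 a1
  have lx2 := ev_le (G := G) x0 a2
  have lx3 := ev_le (G := G) x0 a3
  have lxp := ev_le (G := G) x0 p
  have lxq := ev_le (G := G) x0 q
  rcases hcase with hqr | ⟨hqr, hxq⟩
  · rw [hqr] at Rq Rr
    clear Kq1 Kq2 Kq3
    obtain ⟨⟨e1, e2, e3⟩, f12, f13, f23⟩ := caseP lp1 lp2 lp3 lq1 lq2 lq3 lr1 lr2 lr3
      (b12 := ev G a1 a2) (b13 := ev G a1 a3) (b23 := ev G a2 a3)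
      (by clear Kr1 Kr2 Kr3; omega) (by clear Kr1 Kr2 Kr3; omega) (by clear Kr1 Kr2 Kr3; omega)
      (by clear Kr1 Kr2 Kr3; omega) (by clear Kr1 Kr2 Kr3; omega) (by clear Kr1 Kr2 Kr3; omega)
    simp [e1, e2, e3, f12, f13, f23, hqr] at Kr1 Kr2 Kr3
    omega
  · rw [hqr] at Rq Rr
    simp only [hqr, hxq] at D Kq1 Kq2 Kq3 Kr1 Kr2 Kr3
    refine caseM (ev G p a1) (ev G p a2) (ev G p a3) (ev G q a1) (ev G q a2) (ev G q a3)
      (ev G r a1) (ev G r a2) (ev G r a3) (ev G a1 a2) (ev G a1 a3) (ev G a2 a3)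
      (ev G x0 a1) (ev G x0 a2) (ev G x0 a3) lp1 lp2 lp3 lq1 lq2 lq3 lr1 lr2 lr3 lx1 lx2 lx3
      ?_ ?_ ?_ ?_ ?_ ?_ ?_ ?_ ?_ ?_ ?_ ?_ ?_
    iterate 7
      · clear Kq1 Kq2 Kq3 Kr1 Kr2 Kr3
        omega
    all_goals
      clear Rp Rq Rr R1 R2 R3 D
      grind

theorem Bad.false (h : Bad G) : False := by
  obtain ⟨-, h4⟩ := h.structureX
  have cX := h.cards.1
  by_cases hP : ∃ x0 ∈ XX G, 2 ≤ (nb G (XX G) x0).card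
  · obtain ⟨x0, hx0, h2⟩ := hP
    obtain ⟨p, hp, q, hq, hpq⟩ := Finset.one_lt_card.1 (by omega : 1 < (nb G (XX G) x0).card)
    obtain ⟨hpX, ap⟩ := mem_nb.1 hp
    obtain ⟨hqX, aq⟩ := mem_nb.1 hq
    have n01 := ap.ne
    have n02 := aq.ne
    have hsub : ({x0, p, q} : Finset V) ⊆ XX G := by
      intro u hu
      simp only [Finset.mem_insert, Finset.mem_singleton] at hu
      rcases hu with rfl | rfl | rfl <;> assumption
    have hc : (XX G \ {x0, p, q}).card = 1 := by
      rw [Finset.card_sdiff_of_subset hsub, cX,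
        Finset.card_eq_three.2 ⟨x0, p, q, n01, n02, hpq, rfl⟩]
    obtain ⟨r, hr⟩ := Finset.card_eq_one.1 hc
    have hrm : r ∈ XX G \ {x0, p, q} := by rw [hr]; simp
    simp only [Finset.mem_sdiff, Finset.mem_insert, Finset.mem_singleton, not_or] at hrm
    obtain ⟨hrX, r0, rp, rq⟩ := hrm
    have hX : XX G = {x0, p, q, r} := by
      have : XX G = {x0, p, q} ∪ (XX G \ {x0, p, q}) := by
        rw [Finset.union_sdiff_of_subset hsub]
      rw [this, hr]
      ext u
      simp only [Finset.mem_union, Finset.mem_insert, Finset.mem_singleton]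
      tauto
    have hsum : ∀ f : V → ℕ, ∑ u ∈ XX G, f u = f x0 + (f p + (f q + f r)) := by
      intro f
      rw [hX, Finset.sum_insert, Finset.sum_insert, Finset.sum_insert, Finset.sum_singleton]
      all_goals
        simp only [Finset.mem_insert, Finset.mem_singleton]
        grind
    rw [hsum] at h4
    simp only [nb_ev, hsum] at h4
    have e1 := ev_one.2 ap
    have e2 := ev_one.2 aq
    rw [ev_comm p x0, ev_comm q x0, e1, e2] at h4
    exact h.finish hX n01 n02 (Ne.symm r0) hpq (Ne.symm rp) (Ne.symm rq) (by omega) (by omega)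
      (by omega) (Or.inl (by omega))
  · push Not at hP
    have h1 : ∀ x ∈ XX G, (nb G (XX G) x).card = 1 := by
      have hle : ∀ x ∈ XX G, (nb G (XX G) x).card ≤ 1 := fun x hx => by
        have := hP x hx
        omega
      have heq : ∑ x ∈ XX G, (nb G (XX G) x).card = ∑ x ∈ XX G, 1 := by simp [h4, cX]
      exact (Finset.sum_eq_sum_iff_of_le hle).1 heq
    obtain ⟨x0, hx0⟩ := Finset.card_pos.1 (by omega : 0 < (XX G).card)
    obtain ⟨p, hp⟩ := Finset.card_pos.1 (by rw [h1 x0 hx0]; norm_num : 0 < (nb G (XX G) x0).card)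
    obtain ⟨hpX, ap⟩ := mem_nb.1 hp
    have n01 := ap.ne
    have hsub : ({x0, p} : Finset V) ⊆ XX G := by
      intro u hu
      simp only [Finset.mem_insert, Finset.mem_singleton] at hu
      rcases hu with rfl | rfl <;> assumption
    have hc : (XX G \ {x0, p}).card = 2 := by
      rw [Finset.card_sdiff_of_subset hsub, cX, Finset.card_pair n01]
    obtain ⟨q, r, hqr, hr⟩ := Finset.card_eq_two.1 hc
    have hqm : q ∈ XX G \ {x0, p} := by rw [hr]; simp
    have hrm : r ∈ XX G \ {x0, p} := by rw [hr]; simp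
    simp only [Finset.mem_sdiff, Finset.mem_insert, Finset.mem_singleton, not_or] at hrm hqm
    obtain ⟨hrX, r0, rp⟩ := hrm
    obtain ⟨hqX, q0, qp⟩ := hqm
    have hX : XX G = {x0, p, q, r} := by
      have : XX G = {x0, p} ∪ (XX G \ {x0, p}) := by
        rw [Finset.union_sdiff_of_subset hsub]
      rw [this, hr]
      ext u
      simp only [Finset.mem_union, Finset.mem_insert, Finset.mem_singleton]
      tauto
    have hsum : ∀ f : V → ℕ, ∑ u ∈ XX G, f u = f x0 + (f p + (f q + f r)) := by
      intro f
      rw [hX, Finset.sum_insert, Finset.sum_insert, Finset.sum_insert, Finset.sum_singleton]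
      all_goals
        simp only [Finset.mem_insert, Finset.mem_singleton]
        grind
    have e1 := ev_one.2 ap
    have s0 := h1 x0 hx0
    have sp := h1 p hpX
    have sq := h1 q hqX
    rw [nb_ev, hsum] at s0 sp sq
    rw [ev_self, e1] at s0
    rw [ev_self, ev_comm p x0, e1] at sp
    rw [ev_self, ev_comm q x0, ev_comm q p] at sq
    exact h.finish hX n01 (Ne.symm q0) (Ne.symm r0) (Ne.symm qp) (Ne.symm rp) hqr (by omega)
      (by omega) (by omega) (Or.inr ⟨by omega, by omega⟩)

end final

end K6

theorem order12_minDegree6_size38_hasK6Minor {V : Type*} [Fintype V] (G : SimpleGraph V)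
    (hcard : Fintype.card V = 12) (hdeg : ∀ v : V, 6 ≤ G.degree v)
    (hsize : G.edgeFinset.card = 38) :
    G.HasCompleteMinor 6 := by
  by_contra hno
  have hs : ∑ u, (K6.nb G Finset.univ u).card = 76 := by
    rw [K6.sum_deg, hsize]
  exact K6.Bad.false (G := G) ⟨hcard, hno, fun u => by rw [← K6.degree_eq]; exact hdeg u, hs,
    fun x y hxy => K6.common3 hcard hsize hno hxy⟩
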